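/- arXiv:1612.04008 — 2 statements merged into one kernel-verified Lean document; each statement's English description precedes it below -/
import Mathlib

section
/- For every ε > 0 there exist a constant C > 0 and an integer l_0 such that for all integers l ≥ l_0, all m, all i, all j ∈ {1,…,n}, and all admissible P^i, Λ_i: | ∫_{ℝ^n} K(x/λ) U_{P^i,Λ_i}(x)^{(n+2s)/(n−2s)} (∂U_{P^i,Λ_i}/∂P^i_j)(x) dx − (n−2s) C_0^{2n/(n−2s)} β a_j Λ_i^{−(β−2)} λ^{−β} ( ∫_{ℝ^n} |x_1|^β (1+|x|²)^{−(n+1)} dx ) (P^i_j − X^i_j) | ≤ C |P^i − X^i|² λ^{−β} + ε λ^{−β}. -/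
/-- `X` enumerates the lattice points `{d·q : q ∈ ([0,m+1)^k × {0}) ∩ ℤ^n}` (with spacing `d = λl`). -/
def latticeEnum (n k m : ℕ) (d : ℝ)
    (X : Fin ((m + 1) ^ k) → EuclideanSpace ℝ (Fin n)) : Prop :=
  Function.Injective X ∧
  (∀ i, ∃ q : Fin n → ℤ,
      (∀ j : Fin n, (j : ℕ) < k → 0 ≤ q j ∧ q j ≤ (m : ℤ)) ∧
      (∀ j : Fin n, k ≤ (j : ℕ) → q j = 0) ∧
      (∀ j : Fin n, X i j = d * (q j : ℝ))) ∧
  (∀ q : Fin n → ℤ,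
      (∀ j : Fin n, (j : ℕ) < k → 0 ≤ q j ∧ q j ≤ (m : ℤ)) →
      (∀ j : Fin n, k ≤ (j : ℕ) → q j = 0) →
      ∃ i, ∀ j : Fin n, X i j = d * (q j : ℝ))

/-- Conditions (H₁)–(H₃) on `K`, with `K(0) = 1`: positivity and boundedness, `C^{1,1}`
regularity, `1`-periodicity in the first `k` variables, and the expansion
`K(x) = 1 + Σ aᵢ|xᵢ|^β + R(x)` near the critical point `0`. -/
def KHyp (n k : ℕ) (β : ℝ) (a : Fin n → ℝ)
    (K : EuclideanSpace ℝ (Fin n) → ℝ) : Prop :=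
  (∃ K₀ K₁ : ℝ, 0 < K₀ ∧ ∀ x, K₀ ≤ K x ∧ K x ≤ K₁) ∧
  ContDiff ℝ 1 K ∧ (∃ L : NNReal, LipschitzWith L (fderiv ℝ K)) ∧
  (∀ x : EuclideanSpace ℝ (Fin n), ∀ j : Fin n, (j : ℕ) < k →
      K (x + EuclideanSpace.single j (1 : ℝ)) = K x) ∧
  K 0 = 1 ∧ fderiv ℝ K 0 = 0 ∧
  (∀ i, a i ≠ 0) ∧ (∑ i, a i) < 0 ∧
  ∃ R : EuclideanSpace ℝ (Fin n) → ℝ,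
    (∀ᶠ x in nhds 0, K x = 1 + (∑ i, a i * |x i| ^ β) + R x) ∧
    ContDiff ℝ (⌊β⌋₊ - 1 : ℕ) R ∧
    (∃ L : NNReal, LipschitzWith L (iteratedFDeriv ℝ (⌊β⌋₊ - 1) R)) ∧
    Filter.Tendsto
      (fun y : EuclideanSpace ℝ (Fin n) =>
        ∑ j ∈ Finset.range (⌊β⌋₊ + 1), ‖iteratedFDeriv ℝ j R y‖ * ‖y‖ ^ (-β + (j : ℝ)))
      (nhdsWithin 0 {0}ᶜ) (nhds 0)

/-!
Multiplied out, `U_{P,Λ} ^ q * ∂U_{P,Λ}/∂P_j` is a constant times the dipole kernel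
`y_j (1 + Λ²|y|²)^(-(n+1))` in the variable `y = x - P`. Periodicity of `K` moves the lattice point
`X` to the origin, so the integral becomes that of `K((y + p)/λ)`, `p = P - X`, against the dipole.
Expand `K` at `0`. The dipole is odd in `y_j` and even in the other coordinates, so the constant `1`
and the terms `aᵢ|yᵢ + pᵢ|^β` with `i ≠ j` integrate to zero. In the remaining expansion
`|y_j + p_j|^β = |y_j|^β + β p_j |y_j|^(β-2) y_j + O(p_j²)`
the first term is even and drops out, the second gives the main term after rescaling `y` by `Λ`,
and the last, by `β ≥ 2`, contributes `O(|P - X|² λ^(-β))`. The remainder of `K` is `o(|x|^β)` near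
`0` and `O(|x|^γ)` away from `0` for any `γ > β`; choosing `γ` so that the dipole still integrates
`|y|^γ` makes its contribution `o(λ^(-β))`.
-/

open MeasureTheory Filter Asymptotics
open scoped Topology RealInnerProductSpace

section SecondOrder

theorem hasDerivAt_abs_rpow_mul_self {q : ℝ} (hq : 0 ≤ q) (t : ℝ) :
    HasDerivAt (fun t : ℝ => |t| ^ q * t) ((q + 1) * |t| ^ q) t := by
  rcases hq.eq_or_lt with rfl | hq
  · simpa using hasDerivAt_id' t
  rcases eq_or_ne t 0 with rfl | ht
  · have h : Tendsto (fun t : ℝ => |t| ^ q) (𝓝[≠] 0) (𝓝 0) := by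
      have : Continuous fun t : ℝ => |t| ^ q := continuous_abs.rpow_const fun _ => Or.inr hq.le
      simpa [Real.zero_rpow hq.ne'] using (this.tendsto 0).mono_left nhdsWithin_le_nhds
    rw [hasDerivAt_iff_tendsto_slope_zero]
    simp only [abs_zero, Real.zero_rpow hq.ne', mul_zero]
    refine h.congr' ?_
    filter_upwards [self_mem_nhdsWithin] with x (hx : x ≠ 0)
    simp only [zero_add, smul_eq_mul, sub_zero]
    field_simp
  · have hmul := ((hasDerivAt_abs ht).rpow_const (p := q) (Or.inl (abs_ne_zero.2 ht))).mul
      (hasDerivAt_id t)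
    refine hmul.congr_deriv ?_
    have hpow : |t| ^ q = |t| ^ (q - 1) * |t| := by
      rw [← Real.rpow_add_one (abs_ne_zero.2 ht), sub_add_cancel]
    have hsign : (SignType.sign t : ℝ) * t = |t| := sign_mul_self t
    simp only [id]
    linear_combination (q * |t| ^ (q - 1)) * hsign - q * hpow

theorem norm_image_sub_sub_smul_deriv_le {F : Type*} [NormedAddCommGroup F] [NormedSpace ℝ F]
    {f f' f'' : ℝ → F} {s : Set ℝ} {C x y : ℝ} (hs : Convex ℝ s)
    (hf : ∀ z ∈ s, HasDerivWithinAt f (f' z) s z) (hf' : ∀ z ∈ s, HasDerivWithinAt f' (f'' z) s z)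
    (hC : ∀ z ∈ s, ‖f'' z‖ ≤ C) (hx : x ∈ s) (hy : y ∈ s) :
    ‖f y - f x - (y - x) • f' x‖ ≤ C * ‖y - x‖ ^ 2 := by
  have hseg : segment ℝ x y ⊆ s := hs.segment_subset hx hy
  have hC0 : 0 ≤ C := (norm_nonneg _).trans (hC x hx)
  have hderiv : ∀ z ∈ segment ℝ x y,
      HasDerivWithinAt (fun z => f z - (z - x) • f' x) (f' z - f' x) (segment ℝ x y) z :=
    fun z hz => ((hf z (hseg hz)).mono hseg).sub <| by
      simpa using (((hasDerivAt_id z).sub_const x).smul_const (f' x)).hasDerivWithinAt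
  have hbound : ∀ z ∈ segment ℝ x y, ‖f' z - f' x‖ ≤ C * ‖y - x‖ := fun z hz =>
    (hs.norm_image_sub_le_of_norm_hasDerivWithin_le hf' hC hx (hseg hz)).trans <|
      mul_le_mul_of_nonneg_left (norm_sub_le_of_mem_segment hz) hC0
  have := (convex_segment x y).norm_image_sub_le_of_norm_hasDerivWithin_le hderiv hbound
    (left_mem_segment ℝ x y) (right_mem_segment ℝ x y)
  calc ‖f y - f x - (y - x) • f' x‖
      = ‖f y - (y - x) • f' x - (f x - (x - x) • f' x)‖ := by
        rw [sub_self, zero_smul, sub_zero, sub_right_comm]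
    _ ≤ C * ‖y - x‖ * ‖y - x‖ := this
    _ = C * ‖y - x‖ ^ 2 := by ring

theorem abs_abs_add_rpow_sub_sub_le {β : ℝ} (hβ : 2 ≤ β) (t : ℝ) {p : ℝ} (hp : |p| ≤ 1) :
    |(|t + p| ^ β - |t| ^ β - p * (β * (|t| ^ (β - 2) * t)))|
      ≤ β * (β - 1) * (1 + |t|) ^ (β - 2) * p ^ 2 := by
  have hsecond : ∀ z ∈ Metric.closedBall t 1,
      ‖β * ((β - 2 + 1) * |z| ^ (β - 2))‖ ≤ β * (β - 1) * (1 + |t|) ^ (β - 2) := by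
    intro z hz
    have hz : |z| ≤ 1 + |t| := by
      have := abs_add_le (z - t) t
      rw [sub_add_cancel] at this
      linarith [mem_closedBall_iff_norm.1 hz, Real.norm_eq_abs (z - t)]
    have hcoef : 0 ≤ β * (β - 1) := mul_nonneg (by linarith) (by linarith)
    calc ‖β * ((β - 2 + 1) * |z| ^ (β - 2))‖ = ‖β * (β - 1) * |z| ^ (β - 2)‖ := by ring_nf
      _ = β * (β - 1) * |z| ^ (β - 2) :=
        Real.norm_of_nonneg (mul_nonneg hcoef (Real.rpow_nonneg (abs_nonneg z) _))
      _ ≤ β * (β - 1) * (1 + |t|) ^ (β - 2) :=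
        mul_le_mul_of_nonneg_left (Real.rpow_le_rpow (abs_nonneg z) hz (by linarith)) hcoef
  have := norm_image_sub_sub_smul_deriv_le (convex_closedBall t 1)
    (fun z _ => ((hasDerivAt_abs_rpow z (by linarith : 1 < β)).congr_deriv
      (mul_assoc _ _ _)).hasDerivWithinAt)
    (fun z _ => ((hasDerivAt_abs_rpow_mul_self (by linarith : 0 ≤ β - 2) z).const_mul
      β).hasDerivWithinAt)
    hsecond (Metric.mem_closedBall_self zero_le_one)
    (show t + p ∈ Metric.closedBall t 1 by simpa using hp)
  simpa using this

end SecondOrder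

/-- The radial profile `(1 + Λ²|y|²)^(-ν)` to which all powers and derivatives of a bubble of
concentration `Λ` reduce. -/
noncomputable def bubbleWeight {E : Type*} [Norm E] (Λ ν : ℝ) (y : E) : ℝ :=
  (1 + Λ ^ 2 * ‖y‖ ^ 2) ^ (-ν)

/-- The standard bubble `U_{ξ,Λ}` with centre `ξ`, concentration `Λ`, and decay exponent `τ`
(which is `(n - 2s)/2` for the fractional Laplacian `(-Δ)^s` on `ℝⁿ`). -/
noncomputable def bubble {E : Type*} [NormedAddCommGroup E] (C₀ τ : ℝ) (ξ : E) (Λ : ℝ) (x : E) :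
    ℝ :=
  C₀ * (Λ / (1 + Λ ^ 2 * ‖x - ξ‖ ^ 2)) ^ τ

section Bubble

variable {E : Type*} [NormedAddCommGroup E]

theorem bubbleWeight_pos (Λ ν : ℝ) (y : E) : 0 < bubbleWeight Λ ν y := by
  unfold bubbleWeight
  positivity

theorem bubbleWeight_mul (Λ μ ν : ℝ) (y : E) :
    bubbleWeight Λ μ y * bubbleWeight Λ ν y = bubbleWeight Λ (μ + ν) y := by
  rw [bubbleWeight, bubbleWeight, bubbleWeight, neg_add, Real.rpow_add (by positivity)]

theorem bubbleWeight_rpow (Λ ν q : ℝ) (y : E) :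
    bubbleWeight Λ ν y ^ q = bubbleWeight Λ (ν * q) y := by
  rw [bubbleWeight, bubbleWeight, ← neg_mul, Real.rpow_mul (by positivity)]

theorem continuous_bubbleWeight (Λ ν : ℝ) : Continuous (bubbleWeight Λ ν : E → ℝ) :=
  Continuous.rpow_const (by fun_prop) fun _ => Or.inl (by positivity)

theorem bubble_eq_mul_bubbleWeight {Λ : ℝ} (hΛ : 0 ≤ Λ) (C₀ τ : ℝ) (ξ x : E) :
    bubble C₀ τ ξ Λ x = C₀ * Λ ^ τ * bubbleWeight Λ τ (x - ξ) := by
  rw [bubble, bubbleWeight, Real.div_rpow hΛ (by positivity), Real.rpow_neg (by positivity)]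
  ring

theorem bubbleWeight_le {C₁ Λ ν : ℝ} (hC₁ : 0 < C₁) (hΛ : C₁ ≤ Λ) (hν : 0 < ν) (y : E) :
    bubbleWeight Λ ν y ≤ min 1 (C₁ ^ 2) ^ (-ν) * 2 ^ ν * (1 + ‖y‖) ^ (-(2 * ν)) := by
  set κ := min 1 (C₁ ^ 2)
  have hκ : 0 < κ := by positivity
  have hbase : κ * (1 + ‖y‖ ^ 2) ≤ 1 + Λ ^ 2 * ‖y‖ ^ 2 := by
    rw [mul_add, mul_one]
    gcongr
    · exact min_le_left _ _
    · exact (min_le_right _ _).trans (by gcongr)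
  calc bubbleWeight Λ ν y ≤ (κ * (1 + ‖y‖ ^ 2)) ^ (-ν) :=
        Real.rpow_le_rpow_of_nonpos (by positivity) hbase (by linarith)
    _ = κ ^ (-ν) * (1 + ‖y‖ ^ 2) ^ (-(2 * ν) / 2) := by
        rw [Real.mul_rpow hκ.le (by positivity)]
        ring_nf
    _ ≤ κ ^ (-ν) * (2 ^ (2 * ν / 2) * (1 + ‖y‖) ^ (-(2 * ν))) := by
        gcongr
        exact rpow_neg_one_add_norm_sq_le y (by positivity)
    _ = κ ^ (-ν) * 2 ^ ν * (1 + ‖y‖) ^ (-(2 * ν)) := by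
        rw [mul_div_cancel_left₀ ν two_ne_zero, mul_assoc]

variable [InnerProductSpace ℝ E]

theorem hasDerivAt_bubbleWeight_sub_smul (Λ ν : ℝ) (y v : E) :
    HasDerivAt (fun b : ℝ => bubbleWeight Λ ν (y - b • v))
      (2 * ν * Λ ^ 2 * ⟪v, y⟫ * bubbleWeight Λ (ν + 1) y) 0 := by
  have hline : HasDerivAt (fun b : ℝ => y - b • v) (-v) 0 := by
    simpa using ((hasDerivAt_id (0 : ℝ)).smul_const v).const_sub y
  have hpow := ((hline.norm_sq.const_mul (Λ ^ 2)).const_add 1).rpow_const (p := -ν)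
    (Or.inl (by positivity))
  refine hpow.congr_deriv ?_
  rw [zero_smul, sub_zero, inner_neg_right, real_inner_comm, bubbleWeight, neg_add,
    ← sub_eq_add_neg]
  ring

theorem bubble_rpow_mul_deriv {C₀ Λ : ℝ} (hC₀ : 0 < C₀) (hΛ : 0 < Λ) (τ q : ℝ) (ξ x v : E) :
    bubble C₀ τ ξ Λ x ^ q * deriv (fun b : ℝ => bubble C₀ τ (ξ + b • v) Λ x) 0 =
      2 * τ * C₀ ^ (q + 1) * Λ ^ (τ * (q + 1) + 2) *
        (⟪v, x - ξ⟫ * bubbleWeight Λ (τ * (q + 1) + 1) (x - ξ)) := by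
  have hderiv : HasDerivAt (fun b : ℝ => bubble C₀ τ (ξ + b • v) Λ x)
      (C₀ * Λ ^ τ * (2 * τ * Λ ^ 2 * ⟪v, x - ξ⟫ * bubbleWeight Λ (τ + 1) (x - ξ))) 0 := by
    simp only [bubble_eq_mul_bubbleWeight hΛ.le, ← sub_sub]
    exact (hasDerivAt_bubbleWeight_sub_smul Λ τ (x - ξ) v).const_mul _
  have hΛpow : Λ ^ (τ * (q + 1) + 2) = Λ ^ (τ * q) * Λ ^ τ * Λ ^ 2 := by
    rw [← Real.rpow_add hΛ, ← Real.rpow_natCast Λ 2, ← Real.rpow_add hΛ]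
    congr 1
    push_cast
    ring
  have hweight : bubbleWeight Λ (τ * (q + 1) + 1) (x - ξ) =
      bubbleWeight Λ (τ * q) (x - ξ) * bubbleWeight Λ (τ + 1) (x - ξ) := by
    rw [bubbleWeight_mul]
    ring_nf
  rw [hderiv.deriv, bubble_eq_mul_bubbleWeight hΛ.le,
    Real.mul_rpow (by positivity) (bubbleWeight_pos _ _ _).le, Real.mul_rpow hC₀.le (by positivity),
    ← Real.rpow_mul hΛ.le, bubbleWeight_rpow, hΛpow, hweight, Real.rpow_add_one hC₀.ne']
  ring

end Bubble

section Moments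

variable {ι : Type*} [Fintype ι] {γ ν : ℝ}

theorem abs_apply_le_norm (y : EuclideanSpace ℝ ι) (i : ι) : |y i| ≤ ‖y‖ :=
  PiLp.norm_apply_le y i

/-- The kernel `yⱼ (1 + Λ²|y|²)^(-ν)`, the spatial profile of `U ^ q * ∂U/∂ξⱼ` for a bubble `U`. -/
noncomputable def dipole (Λ ν : ℝ) (j : ι) (y : EuclideanSpace ℝ ι) : ℝ :=
  y j * bubbleWeight Λ ν y

theorem norm_mul_dipole_le {C₁ Λ c : ℝ} (hC₁ : 0 < C₁) (hΛ : C₁ ≤ Λ) (hν : 0 < ν)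
    {F : EuclideanSpace ℝ ι → ℝ} (hF : ∀ y, |F y| ≤ c * (1 + ‖y‖) ^ γ) (j : ι)
    (y : EuclideanSpace ℝ ι) :
    ‖F y * dipole Λ ν j y‖ ≤
      c * (min 1 (C₁ ^ 2) ^ (-ν) * 2 ^ ν) * (1 + ‖y‖) ^ (-(2 * ν - γ - 1)) := by
  have hy : 0 < 1 + ‖y‖ := by positivity
  have hcoord : |y j| ≤ 1 + ‖y‖ := by linarith [abs_apply_le_norm y j]
  rw [dipole, Real.norm_eq_abs, abs_mul, abs_mul, abs_of_pos (bubbleWeight_pos Λ ν y)]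
  calc |F y| * (|y j| * bubbleWeight Λ ν y)
      ≤ c * (1 + ‖y‖) ^ γ * ((1 + ‖y‖) *
          (min 1 (C₁ ^ 2) ^ (-ν) * 2 ^ ν * (1 + ‖y‖) ^ (-(2 * ν)))) := by
        have := (bubbleWeight_pos Λ ν y).le
        gcongr
        · exact (abs_nonneg _).trans (hF y)
        · exact hF y
        · exact bubbleWeight_le hC₁ hΛ hν y
    _ = c * (min 1 (C₁ ^ 2) ^ (-ν) * 2 ^ ν) *
          ((1 + ‖y‖) ^ γ * (1 + ‖y‖) ^ (1 : ℝ) * (1 + ‖y‖) ^ (-(2 * ν))) := by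
        rw [Real.rpow_one]
        ring
    _ = c * (min 1 (C₁ ^ 2) ^ (-ν) * 2 ^ ν) * (1 + ‖y‖) ^ (-(2 * ν - γ - 1)) := by
        rw [← Real.rpow_add hy, ← Real.rpow_add hy]
        ring_nf

theorem integrable_one_add_norm_rpow (hγ : γ + Fintype.card ι + 1 < 2 * ν) :
    Integrable fun y : EuclideanSpace ℝ ι => (1 + ‖y‖) ^ (-(2 * ν - γ - 1)) :=
  integrable_one_add_norm (by rw [finrank_euclideanSpace]; linarith)

theorem integrable_mul_dipole (hν : 0 < ν) (hγ : γ + Fintype.card ι + 1 < 2 * ν) {Λ c : ℝ}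
    (hΛ : 0 < Λ) {F : EuclideanSpace ℝ ι → ℝ} (hFm : Measurable F)
    (hF : ∀ y, |F y| ≤ c * (1 + ‖y‖) ^ γ) (j : ι) :
    Integrable fun y => F y * dipole Λ ν j y := by
  have hdipole : Continuous (dipole Λ ν j) :=
    Continuous.mul (by fun_prop) (continuous_bubbleWeight Λ ν)
  exact ((integrable_one_add_norm_rpow hγ).const_mul _).mono'
    (hFm.mul hdipole.measurable).aestronglyMeasurable
    (.of_forall (norm_mul_dipole_le hΛ le_rfl hν hF j))

theorem exists_forall_abs_integral_mul_dipole_le {C₁ : ℝ} (hC₁ : 0 < C₁) (hν : 0 < ν)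
    (hγ : γ + Fintype.card ι + 1 < 2 * ν) :
    ∃ A ≥ 0, ∀ Λ ≥ C₁, ∀ (F : EuclideanSpace ℝ ι → ℝ) (c : ℝ), (∀ y, |F y| ≤ c * (1 + ‖y‖) ^ γ) →
      ∀ j, |∫ y, F y * dipole Λ ν j y| ≤ c * A := by
  refine ⟨min 1 (C₁ ^ 2) ^ (-ν) * 2 ^ ν *
    ∫ y : EuclideanSpace ℝ ι, (1 + ‖y‖) ^ (-(2 * ν - γ - 1)), ?_, fun Λ hΛ F c hF j => ?_⟩
  · have : 0 ≤ ∫ y : EuclideanSpace ℝ ι, (1 + ‖y‖) ^ (-(2 * ν - γ - 1)) :=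
      integral_nonneg fun y => by positivity
    positivity
  · rw [← mul_assoc, ← integral_const_mul]
    exact norm_integral_le_of_norm_le ((integrable_one_add_norm_rpow hγ).const_mul _)
      (.of_forall (norm_mul_dipole_le hC₁ hΛ hν hF j))

theorem integral_comp_linearIsometryEquiv {E : Type*} [NormedAddCommGroup E]
    [InnerProductSpace ℝ E] [FiniteDimensional ℝ E] [MeasurableSpace E] [BorelSpace E]
    (e : E ≃ₗᵢ[ℝ] E) (f : E → ℝ) : ∫ x, f (e x) = ∫ x, f x :=
  e.measurePreserving.integral_comp e.toHomeomorph.measurableEmbedding f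

theorem exists_linearIsometryEquiv_neg_coord (j : ι) :
    ∃ e : EuclideanSpace ℝ ι ≃ₗᵢ[ℝ] EuclideanSpace ℝ ι,
      ∀ y, e y j = -y j ∧ ∀ i ≠ j, e y i = y i := by
  classical
  exact ⟨LinearIsometryEquiv.piLpCongrRight 2 fun i =>
      if i = j then LinearIsometryEquiv.neg ℝ else LinearIsometryEquiv.refl ℝ ℝ,
    fun y => ⟨by simp, fun i hi => by simp [hi]⟩⟩

theorem integral_mul_dipole_eq_zero {F : EuclideanSpace ℝ ι → ℝ} {j : ι}
    (hF : ∀ x y : EuclideanSpace ℝ ι, x j = -y j → (∀ i ≠ j, x i = y i) → F x = F y) (Λ ν : ℝ) :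
    ∫ y, F y * dipole Λ ν j y = 0 := by
  obtain ⟨e, he⟩ := exists_linearIsometryEquiv_neg_coord j
  have hodd : ∀ y, F (e y) * dipole Λ ν j (e y) = -(F y * dipole Λ ν j y) := fun y => by
    rw [hF (e y) y (he y).1 (he y).2, dipole, dipole, bubbleWeight, e.norm_map, (he y).1,
      ← bubbleWeight]
    ring
  have := integral_comp_linearIsometryEquiv e fun y => F y * dipole Λ ν j y
  simp only [hodd, integral_neg] at this
  linarith

theorem integral_abs_apply_rpow_mul_comp_norm_eq (β : ℝ) (φ : ℝ → ℝ) (i j : ι) :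
    ∫ y : EuclideanSpace ℝ ι, |y j| ^ β * φ ‖y‖ = ∫ y : EuclideanSpace ℝ ι, |y i| ^ β * φ ‖y‖ := by
  classical
  let e := LinearIsometryEquiv.piLpCongrLeft 2 ℝ ℝ (Equiv.swap j i)
  have he : ∀ y, e y j = y i := fun y => by
    simp [e, LinearIsometryEquiv.piLpCongrLeft_apply, Equiv.piCongrLeft'_apply]
  rw [← integral_comp_linearIsometryEquiv e]
  simp only [e.norm_map, he]

theorem integral_abs_apply_rpow_mul_bubbleWeight {Λ : ℝ} (hΛ : 0 < Λ) (β ν : ℝ) (i j : ι) :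
    ∫ y : EuclideanSpace ℝ ι, |y j| ^ β * bubbleWeight Λ ν y =
      Λ ^ (-(β + Fintype.card ι)) *
        ∫ y : EuclideanSpace ℝ ι, |y i| ^ β * (1 + ‖y‖ ^ 2) ^ (-ν) := by
  have hscale : ∀ y : EuclideanSpace ℝ ι, |y j| ^ β * bubbleWeight Λ ν y =
      Λ ^ (-β) * (|(Λ • y) j| ^ β * (1 + ‖Λ • y‖ ^ 2) ^ (-ν)) := fun y => by
    rw [PiLp.smul_apply, smul_eq_mul, abs_mul, norm_smul, Real.norm_eq_abs, abs_of_pos hΛ,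
      Real.mul_rpow hΛ.le (abs_nonneg _), mul_pow, bubbleWeight, Real.rpow_neg hΛ.le]
    field_simp
  simp_rw [hscale]
  rw [integral_const_mul, Measure.integral_comp_smul volume
      (fun y : EuclideanSpace ℝ ι => |y j| ^ β * (1 + ‖y‖ ^ 2) ^ (-ν)),
    integral_abs_apply_rpow_mul_comp_norm_eq β (fun r => (1 + r ^ 2) ^ (-ν)) i j,
    finrank_euclideanSpace, abs_of_pos (by positivity), smul_eq_mul, neg_add, Real.rpow_add hΛ,
    Real.rpow_neg hΛ.le (Fintype.card ι : ℝ), Real.rpow_natCast, mul_assoc]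

end Moments

section Expansion

-- Below radius `δ` the little-o bound applies; beyond it `f x = O(‖x‖ ^ γ)`, and the surplus power
-- `γ - β` of `lam⁻¹` beats every constant.
theorem eventually_abs_comp_inv_smul_le {E : Type*} [NormedAddCommGroup E] [NormedSpace ℝ E]
    {f : E → ℝ} {B β γ ε : ℝ} (hβ : 0 ≤ β) (hβγ : β < γ) (hε : 0 < ε)
    (hf : f =o[𝓝 0] fun x => ‖x‖ ^ β) (hB : ∀ x, |f x| ≤ B * (1 + ‖x‖) ^ γ) :
    ∀ᶠ lam : ℝ in atTop, ∀ R ≥ 1, ∀ z, ‖z‖ ≤ R →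
      |f (lam⁻¹ • z)| ≤ ε * lam ^ (-β) * R ^ γ := by
  obtain ⟨δ, hδ, hnear⟩ := Metric.eventually_nhds_iff.1 (hf.bound hε)
  have hB0 : 0 ≤ B := by simpa using (abs_nonneg _).trans (hB 0)
  set M := B * (δ⁻¹ + 1) ^ γ
  have hM : Tendsto (fun lam : ℝ => M * lam ^ (-(γ - β))) atTop (𝓝 0) := by
    simpa using (tendsto_rpow_neg_atTop (sub_pos.2 hβγ)).const_mul M
  filter_upwards [hM.eventually_le_const hε, eventually_gt_atTop 0] with lam hlamM hlam R hR z hz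
  have hrescale : ∀ e : ℝ, 0 ≤ e → ‖lam⁻¹ • z‖ ^ e ≤ lam ^ (-e) * R ^ e := fun e he => by
    rw [norm_smul, norm_inv, Real.norm_of_nonneg hlam.le,
      Real.mul_rpow (by positivity) (norm_nonneg z), Real.inv_rpow hlam.le, Real.rpow_neg hlam.le]
    gcongr
  rcases lt_or_ge ‖lam⁻¹ • z‖ δ with hsmall | hlarge
  · have hbound := hnear (y := lam⁻¹ • z) (by simpa using hsmall)
    rw [Real.norm_eq_abs, Real.norm_of_nonneg (by positivity)] at hbound
    calc |f (lam⁻¹ • z)| ≤ ε * ‖lam⁻¹ • z‖ ^ β := hbound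
      _ ≤ ε * (lam ^ (-β) * R ^ γ) := by
        gcongr
        exact (hrescale β hβ).trans (by gcongr)
      _ = ε * lam ^ (-β) * R ^ γ := by ring
  · have hfar : 1 + ‖lam⁻¹ • z‖ ≤ (δ⁻¹ + 1) * ‖lam⁻¹ • z‖ := by
      rw [add_mul, one_mul, ← div_eq_inv_mul]
      gcongr
      exact (one_le_div hδ).2 hlarge
    calc |f (lam⁻¹ • z)| ≤ B * ((δ⁻¹ + 1) * ‖lam⁻¹ • z‖) ^ γ :=
        (hB _).trans (by gcongr; linarith)
      _ = M * ‖lam⁻¹ • z‖ ^ γ := by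
        rw [Real.mul_rpow (by positivity) (norm_nonneg _), mul_assoc]
      _ ≤ M * (lam ^ (-γ) * R ^ γ) := by
        gcongr
        exact hrescale γ (by linarith)
      _ = M * lam ^ (-(γ - β)) * lam ^ (-β) * R ^ γ := by
        rw [mul_assoc M, ← Real.rpow_add hlam]
        ring_nf
      _ ≤ ε * lam ^ (-β) * R ^ γ := by gcongr

variable {ι : Type*} [Fintype ι] {a : ι → ℝ} {β ν : ℝ}

/-- The leading part `∑ aᵢ|xᵢ|^β` of `K - 1` at the critical point `0`. -/
noncomputable def powerProfile (a : ι → ℝ) (β : ℝ) (x : EuclideanSpace ℝ ι) : ℝ :=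
  ∑ i, a i * |x i| ^ β

theorem powerProfile_smul {r : ℝ} (hr : 0 ≤ r) (a : ι → ℝ) (β : ℝ) (x : EuclideanSpace ℝ ι) :
    powerProfile a β (r • x) = r ^ β * powerProfile a β x := by
  rw [powerProfile, powerProfile, Finset.mul_sum]
  refine Finset.sum_congr rfl fun i _ => ?_
  rw [PiLp.smul_apply, smul_eq_mul, abs_mul, abs_of_nonneg hr, Real.mul_rpow hr (abs_nonneg _)]
  ring

theorem abs_powerProfile_le (hβ : 0 ≤ β) (a : ι → ℝ) (x : EuclideanSpace ℝ ι) :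
    |powerProfile a β x| ≤ (∑ i, |a i|) * ‖x‖ ^ β := by
  rw [powerProfile, Finset.sum_mul]
  refine (Finset.abs_sum_le_sum_abs _ _).trans (Finset.sum_le_sum fun i _ => ?_)
  rw [abs_mul, abs_of_nonneg (Real.rpow_nonneg (abs_nonneg (x i)) β)]
  gcongr
  exact abs_apply_le_norm x i

theorem measurable_powerProfile (a : ι → ℝ) (β : ℝ) : Measurable (powerProfile a β) := by
  unfold powerProfile
  fun_prop

theorem abs_add_rpow_le_one_add_norm_rpow (hβ : 0 ≤ β) {c : ℝ} (hc : |c| ≤ 1)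
    (y : EuclideanSpace ℝ ι) (i : ι) : |(|y i + c| ^ β)| ≤ 1 * (1 + ‖y‖) ^ β := by
  rw [abs_of_nonneg (Real.rpow_nonneg (abs_nonneg _) β), one_mul]
  gcongr
  linarith [abs_add_le (y i) c, abs_apply_le_norm y i]

theorem integrable_abs_add_rpow_mul_dipole (hβ : 0 ≤ β) (hν : β + Fintype.card ι + 1 < 2 * ν)
    {Λ c : ℝ} (hΛ : 0 < Λ) (hc : |c| ≤ 1) (i j : ι) :
    Integrable fun y : EuclideanSpace ℝ ι => |y i + c| ^ β * dipole Λ ν j y :=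
  integrable_mul_dipole (by linarith [(Fintype.card ι).cast_nonneg (α := ℝ)]) hν hΛ (by fun_prop)
    (fun y => abs_add_rpow_le_one_add_norm_rpow hβ hc y i) j

theorem integral_powerProfile_add_mul_dipole (hβ : 0 ≤ β) (hν : β + Fintype.card ι + 1 < 2 * ν)
    {Λ : ℝ} (hΛ : 0 < Λ) (a : ι → ℝ) {p : EuclideanSpace ℝ ι} (hp : ‖p‖ ≤ 1) (j : ι) :
    ∫ y, powerProfile a β (y + p) * dipole Λ ν j y =
      a j * ∫ y : EuclideanSpace ℝ ι, |y j + p j| ^ β * dipole Λ ν j y := by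
  have hint : ∀ i ∈ Finset.univ, Integrable fun y : EuclideanSpace ℝ ι =>
      a i * (|y i + p i| ^ β * dipole Λ ν j y) := fun i _ =>
    (integrable_abs_add_rpow_mul_dipole hβ hν hΛ ((abs_apply_le_norm p i).trans hp) i j).const_mul _
  have hzero : ∀ i ≠ j, ∫ y : EuclideanSpace ℝ ι, |y i + p i| ^ β * dipole Λ ν j y = 0 :=
    fun i hi => integral_mul_dipole_eq_zero (F := fun y => |y i + p i| ^ β)
      (fun x y _ hxy => by rw [hxy i hi]) Λ ν
  simp only [powerProfile, PiLp.add_apply, Finset.sum_mul, mul_assoc]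
  rw [integral_finsetSum _ hint]
  simp only [integral_const_mul]
  exact Finset.sum_eq_single j (fun i _ hi => by rw [hzero i hi, mul_zero]) (by simp)

theorem abs_rpow_sub_two_mul_self_mul_self (hβ : β ≠ 0) (t : ℝ) :
    |t| ^ (β - 2) * t * t = |t| ^ β := by
  rw [mul_assoc, ← abs_mul_abs_self t, ← sq, ← Real.rpow_natCast,
    ← Real.rpow_add' (abs_nonneg t) (by simpa using hβ)]
  simp

theorem integrable_abs_rpow_sub_two_mul_self_mul_dipole (hβ : 2 ≤ β)
    (hν : β + Fintype.card ι + 1 < 2 * ν) {Λ : ℝ} (hΛ : 0 < Λ) (j : ι) :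
    Integrable fun y : EuclideanSpace ℝ ι => |y j| ^ (β - 2) * y j * dipole Λ ν j y := by
  refine integrable_mul_dipole (c := 1) (by linarith [(Fintype.card ι).cast_nonneg (α := ℝ)])
    hν hΛ (by fun_prop) (fun y => ?_) j
  have hy : |y j| ≤ 1 + ‖y‖ := by linarith [abs_apply_le_norm y j]
  calc |(|y j| ^ (β - 2) * y j)| = |y j| ^ (β - 2) * |y j| := by
        rw [abs_mul, abs_of_nonneg (Real.rpow_nonneg (abs_nonneg _) _)]
    _ = |y j| ^ (β - 1) := by
        rw [← Real.rpow_add_one' (abs_nonneg _) (by linarith)]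
        ring_nf
    _ ≤ (1 + ‖y‖) ^ (β - 1) := Real.rpow_le_rpow (abs_nonneg _) hy (by linarith)
    _ ≤ 1 * (1 + ‖y‖) ^ β := by
        rw [one_mul]
        exact Real.rpow_le_rpow_of_exponent_le (by linarith [norm_nonneg y]) (by linarith)

-- The zeroth-order term of the expansion is even in `yⱼ`, so only the first-order term survives.
theorem integral_abs_add_rpow_mul_dipole_sub (hβ : 2 ≤ β) (hν : β + Fintype.card ι + 1 < 2 * ν)
    {Λ c : ℝ} (hΛ : 0 < Λ) (hc : |c| ≤ 1) (j : ι) :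
    (∫ y : EuclideanSpace ℝ ι, |y j + c| ^ β * dipole Λ ν j y) -
        β * c * ∫ y : EuclideanSpace ℝ ι, |y j| ^ β * bubbleWeight Λ ν y =
      ∫ y : EuclideanSpace ℝ ι, (|y j + c| ^ β - |y j| ^ β - c * (β * (|y j| ^ (β - 2) * y j))) *
        dipole Λ ν j y := by
  have hβ0 : 0 ≤ β := by linarith
  have heven : ∫ y : EuclideanSpace ℝ ι, |y j| ^ β * dipole Λ ν j y = 0 :=
    integral_mul_dipole_eq_zero (F := fun y => |y j| ^ β)
      (fun x y hxy _ => by rw [hxy, abs_neg]) Λ ν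
  have hlinear : ∫ y : EuclideanSpace ℝ ι, |y j| ^ (β - 2) * y j * dipole Λ ν j y =
      ∫ y : EuclideanSpace ℝ ι, |y j| ^ β * bubbleWeight Λ ν y := by
    simp only [dipole, ← mul_assoc, abs_rpow_sub_two_mul_self_mul_self (by linarith : β ≠ 0)]
  have hshift := integrable_abs_add_rpow_mul_dipole hβ0 hν hΛ hc j j
  have hcentred : Integrable fun y : EuclideanSpace ℝ ι => |y j| ^ β * dipole Λ ν j y := by
    simpa using integrable_abs_add_rpow_mul_dipole hβ0 hν hΛ (c := 0) (by simp) j j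
  have hdiff : Integrable fun y : EuclideanSpace ℝ ι =>
      |y j + c| ^ β * dipole Λ ν j y - |y j| ^ β * dipole Λ ν j y := hshift.sub hcentred
  have hlin := (integrable_abs_rpow_sub_two_mul_self_mul_dipole hβ hν hΛ j).const_mul (β * c)
  rw [← hlinear, ← integral_const_mul, ← sub_zero (∫ y : EuclideanSpace ℝ ι, |y j + c| ^ β * _),
    ← heven, ← integral_sub hshift hcentred, ← integral_sub hdiff hlin]
  congr with y
  ring

theorem exists_abs_integral_abs_add_rpow_mul_dipole_sub_le (hβ : 2 ≤ β)
    (hν : β + Fintype.card ι + 1 < 2 * ν) {C₁ : ℝ} (hC₁ : 0 < C₁) :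
    ∃ A ≥ 0, ∀ Λ ≥ C₁, ∀ c : ℝ, |c| ≤ 1 → ∀ j : ι,
      |(∫ y : EuclideanSpace ℝ ι, |y j + c| ^ β * dipole Λ ν j y) -
        β * c * ∫ y : EuclideanSpace ℝ ι, |y j| ^ β * bubbleWeight Λ ν y| ≤ A * c ^ 2 := by
  have hcoef : 0 ≤ β * (β - 1) := mul_nonneg (by linarith) (by linarith)
  obtain ⟨A, hA, hmass⟩ := exists_forall_abs_integral_mul_dipole_le (ι := ι) hC₁
    (by linarith [(Fintype.card ι).cast_nonneg (α := ℝ)]) hν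
  refine ⟨β * (β - 1) * A, mul_nonneg hcoef hA, fun Λ hΛ c hc j => ?_⟩
  have htaylor : ∀ y : EuclideanSpace ℝ ι,
      |(|y j + c| ^ β - |y j| ^ β - c * (β * (|y j| ^ (β - 2) * y j)))| ≤
        β * (β - 1) * c ^ 2 * (1 + ‖y‖) ^ β := fun y => by
    have hy : (1 + |y j|) ^ (β - 2) ≤ (1 + ‖y‖) ^ β :=
      (Real.rpow_le_rpow (by positivity) (by linarith [abs_apply_le_norm y j])
        (by linarith)).trans
        (Real.rpow_le_rpow_of_exponent_le (by linarith [norm_nonneg y]) (by linarith))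
    refine (abs_abs_add_rpow_sub_sub_le hβ (y j) hc).trans ?_
    rw [mul_right_comm]
    gcongr
  rw [integral_abs_add_rpow_mul_dipole_sub hβ hν (hC₁.trans_le hΛ) hc, mul_right_comm]
  exact hmass Λ hΛ _ _ htaylor j

theorem abs_sub_one_sub_powerProfile_le {K : EuclideanSpace ℝ ι → ℝ} {B γ : ℝ} (hβ : 0 ≤ β)
    (hβγ : β ≤ γ) (hK : ∀ x, |K x| ≤ B) (a : ι → ℝ) (x : EuclideanSpace ℝ ι) :
    |K x - 1 - powerProfile a β x| ≤ (B + 1 + ∑ i, |a i|) * (1 + ‖x‖) ^ γ := by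
  have hx : 1 ≤ 1 + ‖x‖ := by linarith [norm_nonneg x]
  have hone : 1 ≤ (1 + ‖x‖) ^ γ := Real.one_le_rpow hx (hβ.trans hβγ)
  have hpow : ‖x‖ ^ β ≤ (1 + ‖x‖) ^ γ :=
    (Real.rpow_le_rpow (norm_nonneg x) (by linarith) hβ).trans
      (Real.rpow_le_rpow_of_exponent_le hx hβγ)
  have hB : 0 ≤ B := (abs_nonneg _).trans (hK x)
  calc |K x - 1 - powerProfile a β x| ≤ |K x| + |1| + |powerProfile a β x| :=
        (abs_sub _ _).trans (by gcongr; exact abs_sub _ _)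
    _ ≤ B * (1 + ‖x‖) ^ γ + 1 * (1 + ‖x‖) ^ γ + (∑ i, |a i|) * (1 + ‖x‖) ^ γ := by
        gcongr
        · exact (hK x).trans (le_mul_of_one_le_right hB hone)
        · simpa using hone
        · exact (abs_powerProfile_le hβ a x).trans (by gcongr)
    _ = (B + 1 + ∑ i, |a i|) * (1 + ‖x‖) ^ γ := by ring

theorem eventually_abs_remainder_comp_le {K : EuclideanSpace ℝ ι → ℝ} {B γ ε : ℝ} (hβ : 0 ≤ β)
    (hβγ : β < γ) (hε : 0 < ε) (hK : ∀ x, |K x| ≤ B)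
    (hKo : (fun x => K x - 1 - powerProfile a β x) =o[𝓝 0] fun x => ‖x‖ ^ β) :
    ∀ᶠ lam : ℝ in atTop, ∀ p : EuclideanSpace ℝ ι, ‖p‖ ≤ 1 → ∀ y,
      |K (lam⁻¹ • (y + p)) - 1 - lam ^ (-β) * powerProfile a β (y + p)| ≤
        ε * lam ^ (-β) * (1 + ‖y‖) ^ γ := by
  filter_upwards [eventually_abs_comp_inv_smul_le hβ hβγ hε hKo
    (abs_sub_one_sub_powerProfile_le hβ hβγ.le hK a), eventually_ge_atTop 0]
    with lam hlam hlam0 p hp y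
  have := hlam (1 + ‖y‖) (by linarith [norm_nonneg y]) (y + p) (by linarith [norm_add_le y p])
  rwa [powerProfile_smul (inv_nonneg.2 hlam0), Real.inv_rpow hlam0, ← Real.rpow_neg hlam0] at this

theorem integral_mul_dipole_sub_mul_integral {F H : EuclideanSpace ℝ ι → ℝ} {Λ : ℝ} {j : ι}
    (hone : Integrable (dipole Λ ν j)) (hF : Integrable fun y => F y * dipole Λ ν j y)
    (hH : Integrable fun y => H y * dipole Λ ν j y) (κ : ℝ) :
    (∫ y, F y * dipole Λ ν j y) - κ * ∫ y, H y * dipole Λ ν j y =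
      ∫ y, (F y - 1 - κ * H y) * dipole Λ ν j y := by
  have hzero : ∫ y, dipole Λ ν j y = 0 := by
    simpa using integral_mul_dipole_eq_zero (F := fun _ => 1) (j := j) (by simp) Λ ν
  have hdiff : Integrable fun y => F y * dipole Λ ν j y - dipole Λ ν j y := hF.sub hone
  rw [← integral_const_mul, ← sub_zero (∫ y, F y * _), ← hzero, ← integral_sub hF hone,
    ← integral_sub hdiff (hH.const_mul κ)]
  congr with y
  ring

theorem integrable_powerProfile_add_mul_dipole (hβ : 0 ≤ β)
    (hν : β + Fintype.card ι + 1 < 2 * ν) {Λ : ℝ} (hΛ : 0 < Λ) (a : ι → ℝ)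
    {p : EuclideanSpace ℝ ι} (hp : ‖p‖ ≤ 1) (j : ι) :
    Integrable fun y => powerProfile a β (y + p) * dipole Λ ν j y := by
  refine integrable_mul_dipole (c := ∑ i, |a i|)
    (by linarith [(Fintype.card ι).cast_nonneg (α := ℝ)]) hν hΛ
    ((measurable_powerProfile a β).comp (measurable_id.add_const p))
    (fun y => (abs_powerProfile_le hβ a (y + p)).trans ?_) j
  gcongr
  linarith [norm_add_le y p]

theorem integrable_bounded_mul_dipole {γ B Λ : ℝ} (hγ : 0 ≤ γ)
    (hν : γ + Fintype.card ι + 1 < 2 * ν) (hΛ : 0 < Λ) {F : EuclideanSpace ℝ ι → ℝ}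
    (hFm : Measurable F) (hF : ∀ y, |F y| ≤ B) (j : ι) :
    Integrable fun y => F y * dipole Λ ν j y :=
  integrable_mul_dipole (by linarith [(Fintype.card ι).cast_nonneg (α := ℝ)]) hν hΛ hFm
    (fun y => (hF y).trans (le_mul_of_one_le_right ((abs_nonneg _).trans (hF y))
      (Real.one_le_rpow (by linarith [norm_nonneg y]) hγ))) j

theorem eventually_abs_integral_comp_mul_dipole_sub_le {K : EuclideanSpace ℝ ι → ℝ} {B C₁ ε : ℝ}
    (hβ : 0 ≤ β) (hν : β + Fintype.card ι + 1 < 2 * ν) (hC₁ : 0 < C₁) (hε : 0 < ε)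
    (hKm : Measurable K) (hK : ∀ x, |K x| ≤ B)
    (hKo : (fun x => K x - 1 - powerProfile a β x) =o[𝓝 0] fun x => ‖x‖ ^ β) :
    ∀ᶠ lam : ℝ in atTop, ∀ Λ ≥ C₁, ∀ p : EuclideanSpace ℝ ι, ‖p‖ ≤ 1 → ∀ j,
      |(∫ y, K (lam⁻¹ • (y + p)) * dipole Λ ν j y) -
        lam ^ (-β) * ∫ y, powerProfile a β (y + p) * dipole Λ ν j y| ≤ ε * lam ^ (-β) := by
  obtain ⟨γ, hβγ, hγν⟩ : ∃ γ, β < γ ∧ γ < 2 * ν - Fintype.card ι - 1 :=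
    exists_between (by linarith)
  obtain ⟨A, hA, hmass⟩ := exists_forall_abs_integral_mul_dipole_le (ι := ι) (γ := γ) (ν := ν) hC₁
    (by linarith [(Fintype.card ι).cast_nonneg (α := ℝ)]) (by linarith)
  filter_upwards [eventually_abs_remainder_comp_le hβ hβγ (ε := ε / (A + 1)) (by positivity) hK hKo,
    eventually_ge_atTop 0] with lam hlam hlam0 Λ hΛ p hp j
  have hΛ0 : 0 < Λ := hC₁.trans_le hΛ
  have hone : Integrable (dipole Λ ν j : EuclideanSpace ℝ ι → ℝ) := by
    simpa using integrable_bounded_mul_dipole hβ hν hΛ0 (F := fun _ => 1) measurable_const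
      (fun _ => le_rfl) j
  have hKint := integrable_bounded_mul_dipole hβ hν hΛ0 (F := fun y => K (lam⁻¹ • (y + p)))
    (hKm.comp (by fun_prop)) (fun y => hK _) j
  rw [integral_mul_dipole_sub_mul_integral hone hKint
    (integrable_powerProfile_add_mul_dipole hβ hν hΛ0 a hp j)]
  calc _ ≤ ε / (A + 1) * lam ^ (-β) * A := hmass Λ hΛ _ _ (hlam p hp) j
    _ = ε * lam ^ (-β) * (A / (A + 1)) := by ring
    _ ≤ ε * lam ^ (-β) :=
      mul_le_of_le_one_right (by positivity) ((div_le_one (by positivity)).2 (by linarith))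

theorem exists_eventually_abs_integral_comp_mul_dipole_sub_le {K : EuclideanSpace ℝ ι → ℝ}
    {B C₁ : ℝ} (hβ : 2 ≤ β) (hν : β + Fintype.card ι + 1 < 2 * ν) (hC₁ : 0 < C₁)
    (hKm : Measurable K) (hK : ∀ x, |K x| ≤ B)
    (hKo : (fun x => K x - 1 - powerProfile a β x) =o[𝓝 0] fun x => ‖x‖ ^ β) :
    ∃ A ≥ 0, ∀ ε > 0, ∀ᶠ lam : ℝ in atTop, ∀ Λ ≥ C₁, ∀ p : EuclideanSpace ℝ ι, ‖p‖ ≤ 1 → ∀ j,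
      |(∫ y, K (lam⁻¹ • (y + p)) * dipole Λ ν j y) -
        lam ^ (-β) * (a j * (β * p j *
          ∫ y : EuclideanSpace ℝ ι, |y j| ^ β * bubbleWeight Λ ν y))| ≤
        (A * ‖p‖ ^ 2 + ε) * lam ^ (-β) := by
  obtain ⟨A, hA, htaylor⟩ := exists_abs_integral_abs_add_rpow_mul_dipole_sub_le (ι := ι) hβ hν hC₁
  refine ⟨(∑ i, |a i|) * A, by positivity, fun ε hε => ?_⟩
  have hβ0 : 0 ≤ β := by linarith
  filter_upwards [eventually_abs_integral_comp_mul_dipole_sub_le hβ0 hν hC₁ hε hKm hK hKo,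
    eventually_ge_atTop 0] with lam hlam hlam0 Λ hΛ p hp j
  have hpj : |p j| ≤ ‖p‖ := abs_apply_le_norm p j
  have haj : |a j| ≤ ∑ i, |a i| :=
    Finset.single_le_sum (f := fun i => |a i|) (fun i _ => abs_nonneg _) (Finset.mem_univ j)
  have hremainder := hlam Λ hΛ p hp j
  rw [integral_powerProfile_add_mul_dipole hβ0 hν (hC₁.trans_le hΛ) a hp] at hremainder
  refine (abs_sub_le _ _ _).trans (add_le_add hremainder le_rfl) |>.trans ?_
  rw [← mul_sub, ← mul_sub, abs_mul, abs_mul, abs_of_nonneg (by positivity : 0 ≤ lam ^ (-β))]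
  calc _ ≤ ε * lam ^ (-β) + lam ^ (-β) * ((∑ i, |a i|) * (A * ‖p‖ ^ 2)) := by
        gcongr
        refine (htaylor Λ hΛ (p j) (hpj.trans hp) j).trans ?_
        rw [← sq_abs (p j)]
        gcongr
    _ = _ := by ring

end Expansion

section BubbleInteraction

variable {ι : Type*} [Fintype ι] [DecidableEq ι] {K : EuclideanSpace ℝ ι → ℝ}

theorem integral_comp_smul_mul_bubble_rpow_mul_deriv {C₀ r Λ : ℝ} {X : EuclideanSpace ℝ ι}
    (hX : Function.Periodic K (r • X)) (hC₀ : 0 < C₀) (hΛ : 0 < Λ) (τ q : ℝ)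
    (P : EuclideanSpace ℝ ι) (j : ι) :
    ∫ x, K (r • x) * bubble C₀ τ P Λ x ^ q *
        deriv (fun b : ℝ => bubble C₀ τ (P + b • EuclideanSpace.single j 1) Λ x) 0 =
      2 * τ * C₀ ^ (q + 1) * Λ ^ (τ * (q + 1) + 2) *
        ∫ y, K (r • (y + (P - X))) * dipole Λ (τ * (q + 1) + 1) j y := by
  rw [← integral_add_right_eq_self _ P, ← integral_const_mul]
  congr with y
  have hperiod : K (r • (y + P)) = K (r • (y + (P - X))) := by
    rw [← hX (r • (y + (P - X))), ← smul_add, add_assoc, sub_add_cancel]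
  rw [mul_assoc, bubble_rpow_mul_deriv hC₀ hΛ, add_sub_cancel_right, hperiod, dipole,
    EuclideanSpace.inner_single_left]
  simp only [map_one, one_mul]
  ring

theorem exists_eventually_abs_integral_bubble_sub_le {a : ι → ℝ} {B β τ q C₀ C₁ C₂ : ℝ}
    (hβ : 2 ≤ β) (hτ : 0 < τ) (hq : β + Fintype.card ι < 2 * (τ * (q + 1)) + 1)
    (hC₀ : 0 < C₀) (hC₁ : 0 < C₁) (hC₁₂ : C₁ ≤ C₂) (hKm : Measurable K) (hK : ∀ x, |K x| ≤ B)
    (hKo : (fun x => K x - 1 - powerProfile a β x) =o[𝓝 0] fun x => ‖x‖ ^ β) (i : ι) :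
    ∃ C > 0, ∀ ε > 0, ∀ᶠ lam : ℝ in atTop, ∀ X P : EuclideanSpace ℝ ι,
      Function.Periodic K (lam⁻¹ • X) → ‖P - X‖ ≤ 1 → ∀ Λ ∈ Set.Icc C₁ C₂, ∀ j,
      |(∫ x, K (lam⁻¹ • x) * bubble C₀ τ P Λ x ^ q *
            deriv (fun b : ℝ => bubble C₀ τ (P + b • EuclideanSpace.single j 1) Λ x) 0) -
          2 * τ * C₀ ^ (q + 1) * β * a j * Λ ^ (τ * (q + 1) + 2 - (β + Fintype.card ι)) *
            lam ^ (-β) *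
            (∫ x : EuclideanSpace ℝ ι, |x i| ^ β * (1 + ‖x‖ ^ 2) ^ (-(τ * (q + 1) + 1))) *
            (P j - X j)| ≤
        C * ‖P - X‖ ^ 2 * lam ^ (-β) + ε * lam ^ (-β) := by
  have hexp : 0 ≤ τ * (q + 1) + 2 := by linarith [(Fintype.card ι).cast_nonneg (α := ℝ)]
  obtain ⟨A, hA, hcore⟩ := exists_eventually_abs_integral_comp_mul_dipole_sub_le
    (ν := τ * (q + 1) + 1) hβ (by linarith) hC₁ hKm hK hKo
  set c := 2 * τ * C₀ ^ (q + 1)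
  have hC₂ : 0 < C₂ := hC₁.trans_le hC₁₂
  set G := c * C₂ ^ (τ * (q + 1) + 2)
  have hG : 0 < G := by positivity
  refine ⟨G * A + 1, by positivity, fun ε hε => ?_⟩
  filter_upwards [hcore (ε / G) (by positivity), eventually_ge_atTop 0]
    with lam hlam hlam0 X P hX hPX Λ hΛ j
  have hΛ0 : 0 < Λ := hC₁.trans_le hΛ.1
  have hbound := hlam Λ hΛ.1 (P - X) hPX j
  rw [integral_abs_apply_rpow_mul_bubbleWeight hΛ0 β _ i j] at hbound
  have hle : c * Λ ^ (τ * (q + 1) + 2) ≤ G :=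
    mul_le_mul_of_nonneg_left (Real.rpow_le_rpow hΛ0.le hΛ.2 hexp) (by positivity)
  have hscale : Λ ^ (τ * (q + 1) + 2 - (β + Fintype.card ι)) =
      Λ ^ (τ * (q + 1) + 2) * Λ ^ (-(β + Fintype.card ι)) := by
    rw [← Real.rpow_add hΛ0, ← sub_eq_add_neg]
  rw [integral_comp_smul_mul_bubble_rpow_mul_deriv hX hC₀ hΛ0, hscale]
  set D := (∫ y, K (lam⁻¹ • (y + (P - X))) * dipole Λ (τ * (q + 1) + 1) j y) - _
  calc _ = |c * Λ ^ (τ * (q + 1) + 2) * D| := by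
        congr 1
        simp only [D, PiLp.sub_apply]
        ring
    _ = c * Λ ^ (τ * (q + 1) + 2) * |D| := by
        rw [abs_mul, abs_of_pos (by positivity)]
    _ ≤ G * ((A * ‖P - X‖ ^ 2 + ε / G) * lam ^ (-β)) := by
        gcongr
    _ = G * A * ‖P - X‖ ^ 2 * lam ^ (-β) + ε * lam ^ (-β) := by
        field_simp
    _ ≤ (G * A + 1) * ‖P - X‖ ^ 2 * lam ^ (-β) + ε * lam ^ (-β) := by
        gcongr
        linarith

end BubbleInteraction

section Hypotheses

variable {n k : ℕ} {β : ℝ} {a : Fin n → ℝ} {K : EuclideanSpace ℝ (Fin n) → ℝ}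

theorem KHyp.measurable (hK : KHyp n k β a K) : Measurable K :=
  hK.2.1.continuous.measurable

theorem KHyp.exists_abs_le (hK : KHyp n k β a K) : ∃ B, ∀ x, |K x| ≤ B := by
  obtain ⟨⟨K₀, K₁, hK₀, hK₀₁⟩, -⟩ := hK
  exact ⟨K₁, fun x => by
    rw [abs_of_pos (hK₀.trans_le (hK₀₁ x).1)]
    exact (hK₀₁ x).2⟩

theorem KHyp.isLittleO (hK : KHyp n k β a K) (hβ : 0 < β) :
    (fun x => K x - 1 - ∑ i, a i * |x i| ^ β) =o[𝓝 0] fun x => ‖x‖ ^ β := by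
  obtain ⟨-, -, -, -, hK0, -, -, -, R, hR, -, -, hlim⟩ := hK
  refine isLittleO_iff.2 fun ε hε => ?_
  have hsmall := eventually_nhdsWithin_iff.1 (hlim.eventually_le_const hε)
  filter_upwards [hsmall, hR] with x hx hRx
  rcases eq_or_ne x 0 with rfl | hx0
  · simp [hK0, Real.zero_rpow hβ.ne']
  have hpos : 0 < ‖x‖ ^ β := Real.rpow_pos_of_pos (norm_pos_iff.2 hx0) β
  have hterm : ‖R x‖ * ‖x‖ ^ (-β) ≤ ε := by
    refine le_trans ?_ (hx hx0)
    simpa using Finset.single_le_sum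
      (f := fun j => ‖iteratedFDeriv ℝ j R x‖ * ‖x‖ ^ (-β + (j : ℝ)))
      (fun j _ => by positivity) (Finset.mem_range.2 ⌊β⌋₊.succ_pos)
  have hrem : K x - 1 - ∑ i, a i * |x i| ^ β = R x := by linarith
  rwa [hrem, Real.norm_of_nonneg hpos.le, ← div_le_iff₀ hpos, div_eq_mul_inv,
    ← Real.rpow_neg (norm_nonneg x)]

theorem KHyp.periodic_sum_zsmul_single (hK : KHyp n k β a K) {q : Fin n → ℤ}
    (hq : ∀ j : Fin n, k ≤ (j : ℕ) → q j = 0) :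
    Function.Periodic K (∑ j, q j • EuclideanSpace.single j (1 : ℝ)) := by
  refine Finset.sum_induction _ (Function.Periodic K) (fun _ _ => Function.Periodic.add_period)
    (fun x => by rw [add_zero]) fun j _ => ?_
  rcases lt_or_ge (j : ℕ) k with hj | hj
  · exact Function.Periodic.zsmul (fun x => hK.2.2.2.1 x j hj) (q j)
  · rw [hq j hj, zero_smul]
    exact fun x => by rw [add_zero]

theorem latticeEnum.periodic {m : ℕ} {lam : ℝ} {l : ℕ}
    {X : Fin ((m + 1) ^ k) → EuclideanSpace ℝ (Fin n)} (hX : latticeEnum n k m (lam * l) X)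
    (hK : KHyp n k β a K) (hlam : lam ≠ 0) (i : Fin ((m + 1) ^ k)) :
    Function.Periodic K (lam⁻¹ • X i) := by
  obtain ⟨q, -, hqzero, hXq⟩ := hX.2.1 i
  have hXsum : lam⁻¹ • X i = ∑ j, (l * q j) • EuclideanSpace.single j (1 : ℝ) := by
    ext j
    simp [hXq, Pi.single_apply, hlam, mul_assoc]
  rw [hXsum]
  exact hK.periodic_sum_zsmul_single fun j hj => by rw [hqzero j hj, mul_zero]

end Hypotheses

theorem stmt_16_general {n : ℕ} {s β B C₀ C₁ C₂ : ℝ} (hn0 : 0 < n) (hs : 2 * s < n)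
    (hβ : 2 ≤ β) (hβn : β < n + 1) (hC₀ : 0 < C₀) (hC₁ : 0 < C₁) (hC₁₂ : C₁ ≤ C₂)
    {a : Fin n → ℝ} {K : EuclideanSpace ℝ (Fin n) → ℝ} (hKm : Measurable K)
    (hKb : ∀ x, |K x| ≤ B)
    (hKo : (fun x => K x - 1 - ∑ i, a i * |x i| ^ β) =o[𝓝 0] fun x => ‖x‖ ^ β) :
    ∃ C > 0, ∀ ε > 0, ∀ᶠ lam : ℝ in atTop, ∀ X P : EuclideanSpace ℝ (Fin n),
      Function.Periodic K (lam⁻¹ • X) → ‖P - X‖ ≤ 1 → ∀ Λ ∈ Set.Icc C₁ C₂, ∀ j,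
      |(∫ x, K (lam⁻¹ • x) *
            bubble C₀ (((n : ℝ) - 2 * s) / 2) P Λ x ^ (((n : ℝ) + 2 * s) / ((n : ℝ) - 2 * s)) *
            deriv (fun b : ℝ => bubble C₀ (((n : ℝ) - 2 * s) / 2)
              (P + b • EuclideanSpace.single j 1) Λ x) 0) -
          ((n : ℝ) - 2 * s) * C₀ ^ (2 * (n : ℝ) / ((n : ℝ) - 2 * s)) * β * a j *
            Λ ^ (-(β - 2)) * lam ^ (-β) *
            (∫ x : EuclideanSpace ℝ (Fin n),
              |x ⟨0, hn0⟩| ^ β * (1 + ‖x‖ ^ 2) ^ (-((n : ℝ) + 1))) *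
            (P j - X j)| ≤
        C * ‖P - X‖ ^ 2 * lam ^ (-β) + ε * lam ^ (-β) := by
  have hτ : 0 < (n : ℝ) - 2 * s := by linarith
  have hq : ((n : ℝ) + 2 * s) / (n - 2 * s) + 1 = 2 * n / (n - 2 * s) := by
    field_simp
    ring
  have hdim : ((n : ℝ) - 2 * s) / 2 * (2 * n / (n - 2 * s)) = n := by
    field_simp
  have h := exists_eventually_abs_integral_bubble_sub_le (τ := ((n : ℝ) - 2 * s) / 2)
    (q := ((n : ℝ) + 2 * s) / (n - 2 * s)) hβ (by linarith)
    (by rw [hq, hdim, Fintype.card_fin]; linarith) hC₀ hC₁ hC₁₂ hKm hKb hKo ⟨0, hn0⟩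
  rw [hq, hdim, Fintype.card_fin, mul_div_cancel₀ _ (two_ne_zero' ℝ)] at h
  simpa only [powerProfile, show (n : ℝ) + 2 - (β + n) = -(β - 2) by ring] using h

theorem stmt_16 (n k : ℕ) (s β C₀ C₁ C₂ : ℝ) (hn0 : 0 < n) (hs0 : 0 < s) (hs1 : s < 1)
    (hn : 2 * s + 2 < (n : ℝ)) (hk1 : 1 ≤ k) (hk2 : (k : ℝ) < ((n : ℝ) - 2 * s) / 2)
    (hβ1 : (n : ℝ) - 2 * s < β) (hβ2 : β < (n : ℝ))
    (hC₀ : 0 < C₀) (hC₁ : 0 < C₁) (hC₁₂ : C₁ < C₂)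
    (a : Fin n → ℝ) (K : EuclideanSpace ℝ (Fin n) → ℝ) (hK : KHyp n k β a K)
    (ε : ℝ) (hε : 0 < ε) :
    ∃ C > (0 : ℝ), ∃ l₀ : ℕ, ∀ l : ℕ, l₀ ≤ l → ∀ m : ℕ, 1 ≤ m →
      ∀ lam : ℝ, lam = (l : ℝ) ^ (((n : ℝ) - 2 * s) / (β - (n : ℝ) + 2 * s)) →
      ∀ X : Fin ((m + 1) ^ k) → EuclideanSpace ℝ (Fin n), latticeEnum n k m (lam * l) X →
      ∀ P : Fin ((m + 1) ^ k) → EuclideanSpace ℝ (Fin n), (∀ i, ‖P i - X i‖ < 1 / 2) →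
      ∀ Λ : Fin ((m + 1) ^ k) → ℝ, (∀ i, Λ i ∈ Set.Icc C₁ C₂) →
      ∀ i : Fin ((m + 1) ^ k), ∀ j : Fin n,
        |(∫ x : EuclideanSpace ℝ (Fin n),
              K (lam⁻¹ • x) *
                (C₀ * (Λ i / (1 + Λ i ^ 2 * ‖x - P i‖ ^ 2)) ^ (((n : ℝ) - 2 * s) / 2)) ^
                  (((n : ℝ) + 2 * s) / ((n : ℝ) - 2 * s)) *
                deriv (fun b : ℝ =>
                  C₀ * (Λ i / (1 + Λ i ^ 2 *
                    ‖x - (P i + b • EuclideanSpace.single j (1 : ℝ))‖ ^ 2)) ^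
                      (((n : ℝ) - 2 * s) / 2)) 0) -
            ((n : ℝ) - 2 * s) * C₀ ^ (2 * (n : ℝ) / ((n : ℝ) - 2 * s)) * β * a j *
              Λ i ^ (-(β - 2)) * lam ^ (-β) *
              (∫ x : EuclideanSpace ℝ (Fin n),
                |x ⟨0, hn0⟩| ^ β * (1 + ‖x‖ ^ 2) ^ (-((n : ℝ) + 1))) *
              (P i j - X i j)| ≤
          C * ‖P i - X i‖ ^ 2 * lam ^ (-β) + ε * lam ^ (-β) := by
  obtain ⟨B, hB⟩ := hK.exists_abs_le
  obtain ⟨C, hC, hlarge⟩ := stmt_16_general (s := s) hn0 (by linarith) (by linarith) (by linarith)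
    hC₀ hC₁ hC₁₂.le hK.measurable hB (hK.isLittleO (by linarith))
  have hspacing : Tendsto (fun l : ℕ => (l : ℝ) ^ (((n : ℝ) - 2 * s) / (β - n + 2 * s))) atTop
      atTop :=
    (tendsto_rpow_atTop (div_pos (by linarith) (by linarith))).comp tendsto_natCast_atTop_atTop
  obtain ⟨l₀, hl₀⟩ := eventually_atTop.1
    ((hspacing.eventually (hlarge ε hε)).and (hspacing.eventually_ne_atTop 0))
  refine ⟨C, hC, l₀, fun l hl m _ lam hlam X hX P hP Λ hΛ i j => ?_⟩
  obtain ⟨hbound, hlam0⟩ := hl₀ l hl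
  rw [← hlam] at hbound hlam0
  exact hbound (X i) (P i) (hX.periodic hK hlam0 i) ((hP i).le.trans (by norm_num)) (Λ i) (hΛ i) j
end

section
/- Let c_1, c_2 > 0 be fixed constants, m ≥ 1, N = (m+1)^k, and define A_{ih} = (λl)^{n−2s} |X^i − X^h|^{−(n−2s)} for i ≠ h and A_{ii} = 0, and F(z) = (c_2/2) Σ_{i} Σ_{h ≠ i} A_{ih} z_i z_h − ((n−2s) c_1/(2β)) Σ_{h=1}^{N} z_h^{2β/(n−2s)} for z ∈ ℝ^N. Then F attains its maximum over ℝ^N at some point b = (b_1,…,b_N) with all components positive, b satisfies c_2 Σ_{h ≠ i} A_{ih} b_h = c_1 b_i^{2β/(n−2s) − 1} for every i, and there exist constants 0 < C_1' ≤ C_2', depending only on n, s, k, β, c_1, c_2 (in particular independent of m and l), such that C_1' ≤ b_i ≤ C_2' for all i = 1,…,N. -/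
/-!
A maximizer `b` of `F` over the nonnegative orthant exists because `2β/(n-2s) > 2` makes the power
term dominate the quadratic one at infinity, and `b ≠ 0` because the quadratic term dominates near
the origin. All partial derivatives of `F` at `b` are `≤ 0`, whereas one at a vanishing coordinate
would be `c₂ ∑ A i h * b h > 0`; so `b` is positive and solves the critical point equation. Read at
the indices where `b` is smallest and largest, this equation gives bounds in terms of the row sums
of `A`. After rescaling the points to spacing `1`, each point has a neighbour at distance `1`, so
the row sums are at least `1`; they are at most `∑ ‖v‖ ^ (-(n-2s))` over the lattice `ℤ^k × {0}`,
which converges because `k < n-2s`.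
-/

open Filter Matrix Set Topology

section Variational

theorem hasLineDerivAt_nonpos_of_isMaxOn {E : Type*} [AddCommGroup E] [Module ℝ E] {f : E → ℝ}
    {s : Set E} {b v : E} {D : ℝ} (hmax : IsMaxOn f s b) (hs : segment ℝ b (b + v) ⊆ s)
    (hf : HasLineDerivAt ℝ f D b v) : D ≤ 0 := by
  have hmax_segment : IsMaxOn (fun t : ℝ ↦ f (b + t • v)) (segment ℝ 0 (0 + 1)) 0 := by
    intro t ht
    rw [zero_add, segment_eq_Icc zero_le_one] at ht
    have hmem : b + t • v ∈ segment ℝ b (b + v) := by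
      rw [segment_eq_image']
      exact ⟨t, ht, by simp⟩
    simpa using hmax (hs hmem)
  simpa using hmax_segment.localize.hasFDerivWithinAt_nonpos hf.hasFDerivAt.hasFDerivWithinAt
    (mem_posTangentConeAt_of_segment_subset Subset.rfl)

variable {ι : Type*} [Fintype ι] {A : Matrix ι ι ℝ} {c₁ c₂ p r S : ℝ} {b w z : ι → ℝ}

/-- The functional `F` of the theorem for a general interaction matrix `A` and exponent `p`. -/
noncomputable def energy (A : Matrix ι ι ℝ) (c₁ c₂ p : ℝ) (z : ι → ℝ) : ℝ :=
  c₂ / 2 * (z ⬝ᵥ A *ᵥ z) - c₁ / p * ∑ i, z i ^ p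

/-- The gradient of `energy A c₁ c₂ p` at `b` when `A` is symmetric; its zeros are the solutions of
the critical point equation `c₂ A b = c₁ b ^ (p - 1)`. -/
noncomputable def energyGradient (A : Matrix ι ι ℝ) (c₁ c₂ p : ℝ) (b : ι → ℝ) : ι → ℝ :=
  fun i ↦ c₂ * (A *ᵥ b) i - c₁ * b i ^ (p - 1)

theorem continuous_energy (hp : 0 ≤ p) : Continuous (energy A c₁ c₂ p) := by
  have hquad : Continuous fun z : ι → ℝ ↦ z ⬝ᵥ A *ᵥ z := by fun_prop
  have hpow : Continuous fun z : ι → ℝ ↦ ∑ i, z i ^ p := continuous_finsetSum _ fun i _ ↦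
    (Real.continuous_rpow_const hp).comp (continuous_apply i)
  exact (hquad.const_mul _).sub (hpow.const_mul _)

theorem hasLineDerivAt_dotProduct_mulVec (hA : A.IsSymm) (b v : ι → ℝ) :
    HasLineDerivAt ℝ (fun z ↦ z ⬝ᵥ A *ᵥ z) (2 * (v ⬝ᵥ A *ᵥ b)) b v := by
  have hcross : b ⬝ᵥ A *ᵥ v = v ⬝ᵥ A *ᵥ b := by
    rw [dotProduct_mulVec, ← mulVec_transpose, hA.eq, dotProduct_comm]
  have hexpand (t : ℝ) : (b + t • v) ⬝ᵥ A *ᵥ (b + t • v) =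
      b ⬝ᵥ A *ᵥ b + t * (2 * (v ⬝ᵥ A *ᵥ b)) + t ^ 2 * (v ⬝ᵥ A *ᵥ v) := by
    simp only [mulVec_add, mulVec_smul, add_dotProduct, dotProduct_add, smul_dotProduct,
      dotProduct_smul, smul_eq_mul, hcross]
    ring
  have hderiv := (((hasDerivAt_id (0 : ℝ)).mul_const (2 * (v ⬝ᵥ A *ᵥ b))).const_add
    (b ⬝ᵥ A *ᵥ b)).add ((hasDerivAt_pow 2 (0 : ℝ)).mul_const (v ⬝ᵥ A *ᵥ v))
  simpa [HasLineDerivAt, hexpand] using! hderiv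

theorem hasLineDerivAt_sum_rpow (hp : 1 ≤ p) (b v : ι → ℝ) :
    HasLineDerivAt ℝ (fun z ↦ ∑ i, z i ^ p) (p * ∑ i, v i * b i ^ (p - 1)) b v := by
  rw [Finset.mul_sum]
  refine HasDerivAt.fun_sum fun i _ ↦ ?_
  have hcoord : HasDerivAt (fun t : ℝ ↦ b i + t * v i) (v i) 0 := by
    simpa using ((hasDerivAt_id (0 : ℝ)).mul_const (v i)).const_add (b i)
  simpa [mul_left_comm, mul_assoc] using hcoord.rpow_const (p := p) (Or.inr hp)

theorem hasLineDerivAt_energy (hA : A.IsSymm) (hp : 1 ≤ p) (b v : ι → ℝ) :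
    HasLineDerivAt ℝ (energy A c₁ c₂ p) (v ⬝ᵥ energyGradient A c₁ c₂ p b) b v := by
  have hp0 : p ≠ 0 := by positivity
  have hgrad : v ⬝ᵥ energyGradient A c₁ c₂ p b =
      c₂ / 2 * (2 * (v ⬝ᵥ A *ᵥ b)) - c₁ / p * (p * ∑ i, v i * b i ^ (p - 1)) := by
    simp only [energyGradient, dotProduct, mul_sub, Finset.sum_sub_distrib, mul_left_comm (v _),
      ← Finset.mul_sum]
    field_simp
  rw [hgrad]
  exact ((hasLineDerivAt_dotProduct_mulVec hA b v).const_mul (c₂ / 2)).fun_sub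
    ((hasLineDerivAt_sum_rpow hp b v).const_mul (c₁ / p))

section KKT

variable (hA : A.IsSymm) (hp : 1 ≤ p) (hb : 0 ≤ b) (hmax : IsMaxOn (energy A c₁ c₂ p) (Ici 0) b)

include hA hp hb hmax

theorem dotProduct_energyGradient_nonpos {v : ι → ℝ} (hv : 0 ≤ b + v) :
    v ⬝ᵥ energyGradient A c₁ c₂ p b ≤ 0 :=
  hasLineDerivAt_nonpos_of_isMaxOn hmax ((convex_Ici 0).segment_subset hb hv)
    (hasLineDerivAt_energy hA hp b v)

theorem energyGradient_nonpos (i : ι) : energyGradient A c₁ c₂ p b i ≤ 0 := by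
  classical
  simpa using dotProduct_energyGradient_nonpos hA hp hb hmax
    (add_nonneg hb (Pi.single_nonneg.2 zero_le_one : (0 : ι → ℝ) ≤ Pi.single i 1))

theorem energyGradient_eq_zero {i : ι} (hi : 0 < b i) : energyGradient A c₁ c₂ p b i = 0 := by
  classical
  have hfeasible : 0 ≤ b + Pi.single i (-b i) := by
    intro j
    obtain rfl | hj := eq_or_ne j i
    · simp
    · simpa [hj] using hb j
  have hdecrease := dotProduct_energyGradient_nonpos hA hp hb hmax hfeasible
  rw [single_dotProduct] at hdecrease
  have hmul : 0 ≤ b i * energyGradient A c₁ c₂ p b i := by linarith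
  exact (energyGradient_nonpos hA hp hb hmax i).antisymm ((mul_nonneg_iff_of_pos_left hi).1 hmul)

end KKT

theorem abs_dotProduct_mulVec_le (A : Matrix ι ι ℝ) (z : ι → ℝ) :
    |z ⬝ᵥ A *ᵥ z| ≤ (∑ i, ∑ h, |A i h|) * ‖z‖ ^ 2 := by
  simp only [dotProduct, mulVec, Finset.mul_sum, Finset.sum_mul]
  refine (Finset.abs_sum_le_sum_abs _ _).trans (Finset.sum_le_sum fun i _ ↦
    (Finset.abs_sum_le_sum_abs _ _).trans (Finset.sum_le_sum fun h _ ↦ ?_))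
  calc |z i * (A i h * z h)| = |A i h| * (‖z i‖ * ‖z h‖) := by
        rw [abs_mul, abs_mul, Real.norm_eq_abs, Real.norm_eq_abs]; ring
    _ ≤ |A i h| * ‖z‖ ^ 2 := by
        rw [sq]
        gcongr <;> exact norm_le_pi_norm z _

theorem norm_rpow_le_sum_rpow [Nonempty ι] (hp : 0 ≤ p) (hz : 0 ≤ z) :
    ‖z‖ ^ p ≤ ∑ i, z i ^ p := by
  obtain ⟨i, hi⟩ := Finite.exists_max z
  have hnorm : ‖z‖ ≤ z i := (pi_norm_le_iff_of_nonneg (hz i)).2 fun j ↦ by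
    simpa [abs_of_nonneg (hz j)] using hi j
  calc ‖z‖ ^ p ≤ z i ^ p := by gcongr
    _ ≤ ∑ j, z j ^ p := Finset.single_le_sum (f := fun j ↦ z j ^ p)
        (fun j _ ↦ Real.rpow_nonneg (hz j) p) (Finset.mem_univ i)

theorem eventually_mul_sq_le_mul_rpow (a : ℝ) {c : ℝ} (hc : 0 < c) (hp : 2 < p) :
    ∀ᶠ t : ℝ in atTop, a * t ^ 2 ≤ c * t ^ p := by
  filter_upwards [((tendsto_rpow_atTop (sub_pos.2 hp)).const_mul_atTop hc).eventually_ge_atTop a,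
    eventually_gt_atTop 0] with t ht ht0
  calc a * t ^ 2 ≤ c * t ^ (p - 2) * t ^ 2 := by gcongr
    _ = c * t ^ p := by
        rw [mul_assoc, ← Real.rpow_natCast, ← Real.rpow_add ht0]; norm_num

theorem exists_mul_rpow_lt_mul_sq {a : ℝ} (c : ℝ) (ha : 0 < a) (hp : 2 < p) :
    ∃ t : ℝ, 0 < t ∧ c * t ^ p < a * t ^ 2 := by
  have hlim : Tendsto (fun t : ℝ ↦ c * t ^ (p - 2)) (𝓝[>] 0) (𝓝 0) := by
    have hcont := (Real.continuousAt_rpow_const 0 (p - 2) (Or.inr (by linarith))).const_mul c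
    simpa [ContinuousAt, Real.zero_rpow (sub_pos.2 hp).ne'] using!
      hcont.tendsto.mono_left nhdsWithin_le_nhds
  obtain ⟨t, hta, ht0⟩ := ((hlim.eventually (gt_mem_nhds ha)).and self_mem_nhdsWithin).exists
  have ht0 : 0 < t := ht0
  refine ⟨t, ht0, ?_⟩
  calc c * t ^ p = c * t ^ (p - 2) * t ^ 2 := by
        rw [mul_assoc, ← Real.rpow_natCast, ← Real.rpow_add ht0]; norm_num
    _ < a * t ^ 2 := by gcongr

theorem exists_isMaxOn_energy [Nonempty ι] (A : Matrix ι ι ℝ) (c₂ : ℝ) (hc₁ : 0 < c₁)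
    (hp : 2 < p) : ∃ b : ι → ℝ, 0 ≤ b ∧ IsMaxOn (energy A c₁ c₂ p) (Ici 0) b := by
  have hp0 : 0 < p := by positivity
  refine (continuous_energy hp0.le).continuousOn.exists_isMaxOn' isClosed_Ici self_mem_Ici
    (eventually_inf_principal.2 ?_)
  filter_upwards [tendsto_norm_cocompact_atTop.eventually
    (eventually_mul_sq_le_mul_rpow (|c₂ / 2| * ∑ i, ∑ h, |A i h|) (div_pos hc₁ hp0) hp)]
    with z hgrowth hz
  have hquad : c₂ / 2 * (z ⬝ᵥ A *ᵥ z) ≤ c₁ / p * ∑ i, z i ^ p :=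
    calc c₂ / 2 * (z ⬝ᵥ A *ᵥ z) ≤ |c₂ / 2| * |z ⬝ᵥ A *ᵥ z| := by
          rw [← abs_mul]; exact le_abs_self _
      _ ≤ |c₂ / 2| * ((∑ i, ∑ h, |A i h|) * ‖z‖ ^ 2) := by
          gcongr; exact abs_dotProduct_mulVec_le A z
      _ ≤ c₁ / p * ‖z‖ ^ p := by rwa [← mul_assoc]
      _ ≤ c₁ / p * ∑ i, z i ^ p := by gcongr; exact norm_rpow_le_sum_rpow hp0.le hz
  simpa [energy, Real.zero_rpow hp0.ne'] using hquad

theorem exists_energy_pos (c₁ : ℝ) (hc₂ : 0 < c₂) (hp : 2 < p) (hw : 0 ≤ w)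
    (hAw : 0 < w ⬝ᵥ A *ᵥ w) : ∃ z, 0 ≤ z ∧ 0 < energy A c₁ c₂ p z := by
  obtain ⟨t, ht0, ht⟩ := exists_mul_rpow_lt_mul_sq (a := c₂ / 2 * (w ⬝ᵥ A *ᵥ w))
    (c₁ / p * ∑ i, w i ^ p) (by positivity) hp
  refine ⟨t • w, smul_nonneg ht0.le hw, ?_⟩
  have hquad : (t • w) ⬝ᵥ A *ᵥ (t • w) = (w ⬝ᵥ A *ᵥ w) * t ^ 2 := by
    simp only [mulVec_smul, smul_dotProduct, dotProduct_smul, smul_eq_mul]; ring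
  have hpow : ∑ i, (t • w) i ^ p = (∑ i, w i ^ p) * t ^ p := by
    rw [Finset.sum_mul]
    exact Finset.sum_congr rfl fun i _ ↦ by
      rw [Pi.smul_apply, smul_eq_mul, Real.mul_rpow ht0.le (hw i), mul_comm]
  rw [energy, hquad, hpow]
  linarith

theorem ne_zero_of_isMaxOn_energy (hc₂ : 0 < c₂) (hp : 2 < p) (hw : 0 ≤ w)
    (hAw : 0 < w ⬝ᵥ A *ᵥ w) (hmax : IsMaxOn (energy A c₁ c₂ p) (Ici 0) b) : b ≠ 0 := by
  rintro rfl
  obtain ⟨z, hz, hpos⟩ := exists_energy_pos c₁ hc₂ hp hw hAw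
  have hle : energy A c₁ c₂ p z ≤ energy A c₁ c₂ p 0 := hmax hz
  have hzero : energy A c₁ c₂ p 0 = 0 := by
    simp [energy, Real.zero_rpow (by positivity : p ≠ 0)]
  linarith

theorem pos_of_energyGradient_nonpos (hA : ∀ i h, 0 ≤ A i h) (hApos : ∀ i h, i ≠ h → 0 < A i h)
    (hc₂ : 0 < c₂) (hp : 1 < p) (hb : 0 ≤ b) (hb0 : b ≠ 0)
    (hgrad : ∀ i, energyGradient A c₁ c₂ p b i ≤ 0) (i : ι) : 0 < b i := by
  refine (hb i).lt_of_ne' fun hi ↦ ?_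
  obtain ⟨h, hh⟩ := Function.ne_iff.1 hb0
  have hih : i ≠ h := by rintro rfl; exact hh hi
  have hinteraction : 0 < (A *ᵥ b) i :=
    Finset.sum_pos' (fun j _ ↦ mul_nonneg (hA i j) (hb j))
      ⟨h, Finset.mem_univ h, mul_pos (hApos i h hih) ((hb h).lt_of_ne' hh)⟩
  have hi_grad := hgrad i
  rw [energyGradient, hi, Pi.zero_apply, Real.zero_rpow (sub_pos.2 hp).ne', mul_zero,
    sub_zero] at hi_grad
  exact hi_grad.not_gt (mul_pos hc₂ hinteraction)

section CriticalPointBounds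

variable (hA : ∀ i h, 0 ≤ A i h) (hc₁ : 0 < c₁) (hc₂ : 0 ≤ c₂) (hp : 2 < p) (hb : ∀ i, 0 < b i)
  (hcrit : ∀ i, c₂ * (A *ᵥ b) i = c₁ * b i ^ (p - 1))

include hA hc₁ hc₂ hp hb hcrit

theorem rpow_inv_le_of_le_row_sum (hr : 0 ≤ r) (hrow : ∀ i, r ≤ ∑ h, A i h) (i : ι) :
    (c₂ * r / c₁) ^ (p - 2)⁻¹ ≤ b i := by
  have : Nonempty ι := ⟨i⟩
  obtain ⟨j, hj⟩ := Finite.exists_min b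
  refine le_trans ?_ (hj i)
  rw [Real.rpow_inv_le_iff_of_pos (by positivity) (hb j).le (sub_pos.2 hp), div_le_iff₀' hc₁]
  refine le_of_mul_le_mul_right ?_ (hb j)
  calc c₂ * r * b j ≤ c₂ * ((∑ h, A j h) * b j) := by
        rw [mul_assoc]
        gcongr
        exacts [(hb j).le, hrow j]
    _ ≤ c₂ * (A *ᵥ b) j := by
        rw [Finset.sum_mul]
        gcongr
        exact Finset.sum_le_sum fun h _ ↦ mul_le_mul_of_nonneg_left (hj h) (hA j h)
    _ = c₁ * b j ^ (p - 2) * b j := by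
        rw [hcrit, mul_assoc, ← Real.rpow_add_one (hb j).ne']; ring_nf

theorem le_rpow_inv_of_row_sum_le (hrow : ∀ i, ∑ h, A i h ≤ S) (i : ι) :
    b i ≤ (c₂ * S / c₁) ^ (p - 2)⁻¹ := by
  have : Nonempty ι := ⟨i⟩
  obtain ⟨j, hj⟩ := Finite.exists_max b
  have hS : 0 ≤ S := (Finset.sum_nonneg fun h _ ↦ hA j h).trans (hrow j)
  refine (hj i).trans ?_
  rw [Real.le_rpow_inv_iff_of_pos (hb j).le (by positivity) (sub_pos.2 hp), le_div_iff₀' hc₁]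
  refine le_of_mul_le_mul_right ?_ (hb j)
  calc c₁ * b j ^ (p - 2) * b j = c₂ * (A *ᵥ b) j := by
        rw [hcrit, mul_assoc, ← Real.rpow_add_one (hb j).ne']; ring_nf
    _ ≤ c₂ * ((∑ h, A j h) * b j) := by
        rw [Finset.sum_mul]
        gcongr
        exact Finset.sum_le_sum fun h _ ↦ mul_le_mul_of_nonneg_left (hj h) (hA j h)
    _ ≤ c₂ * S * b j := by
        rw [mul_assoc]
        gcongr
        exacts [(hb j).le, hrow j]

end CriticalPointBounds

theorem exists_pos_isMaxOn_energy [Nonempty ι] (hsymm : A.IsSymm) (hA : ∀ i h, 0 ≤ A i h)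
    (hApos : ∀ i h, i ≠ h → 0 < A i h) (hr : 0 < r) (hr_row : ∀ i, r ≤ ∑ h, A i h)
    (hS_row : ∀ i, ∑ h, A i h ≤ S) (hc₁ : 0 < c₁) (hc₂ : 0 < c₂) (hp : 2 < p) :
    ∃ b : ι → ℝ, (∀ i, 0 < b i) ∧ IsMaxOn (energy A c₁ c₂ p) (Ici 0) b ∧
      (∀ i, c₂ * (A *ᵥ b) i = c₁ * b i ^ (p - 1)) ∧
      ∀ i, (c₂ * r / c₁) ^ (p - 2)⁻¹ ≤ b i ∧ b i ≤ (c₂ * S / c₁) ^ (p - 2)⁻¹ := by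
  obtain ⟨b, hb, hmax⟩ := exists_isMaxOn_energy A c₂ hc₁ hp
  have hA_one : 0 < (1 : ι → ℝ) ⬝ᵥ A *ᵥ 1 := by
    rw [one_dotProduct]
    exact Finset.sum_pos (fun i _ ↦ by simpa [mulVec, dotProduct] using hr.trans_le (hr_row i))
      Finset.univ_nonempty
  have hb0 : b ≠ 0 := ne_zero_of_isMaxOn_energy hc₂ hp zero_le_one hA_one hmax
  have hp1 : 1 < p := by linarith
  have hb_pos : ∀ i, 0 < b i := pos_of_energyGradient_nonpos hA hApos hc₂ hp1 hb hb0
    (energyGradient_nonpos hsymm hp1.le hb hmax)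
  have hcrit : ∀ i, c₂ * (A *ᵥ b) i = c₁ * b i ^ (p - 1) := fun i ↦
    sub_eq_zero.1 (energyGradient_eq_zero hsymm hp1.le hb hmax (hb_pos i))
  exact ⟨b, hb_pos, hmax, hcrit, fun i ↦
    ⟨rpow_inv_le_of_le_row_sum hA hc₁ hc₂.le hp hb_pos hcrit hr.le hr_row i,
      le_rpow_inv_of_row_sum_le hA hc₁ hc₂.le hp hb_pos hcrit hS_row i⟩⟩

end Variational

section RieszMatrix

variable {ι E : Type*} [NormedAddCommGroup E] {γ : ℝ} {x : ι → E}

/-- The matrix of pairwise interactions `|x i - x h| ^ (-γ)` of the points `x i`. For `γ ≠ 0` its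
diagonal vanishes, as the theorem requires, since `0 ^ (-γ) = 0`. -/
noncomputable def rieszMatrix (γ : ℝ) (x : ι → E) : Matrix ι ι ℝ :=
  Matrix.of fun i h ↦ ‖x i - x h‖ ^ (-γ)

theorem rieszMatrix_isSymm (γ : ℝ) (x : ι → E) : (rieszMatrix γ x).IsSymm :=
  Matrix.IsSymm.ext fun i h ↦ by simp only [rieszMatrix, of_apply, norm_sub_rev]

theorem rieszMatrix_nonneg (γ : ℝ) (x : ι → E) (i h : ι) : 0 ≤ rieszMatrix γ x i h :=
  Real.rpow_nonneg (norm_nonneg _) _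

theorem rieszMatrix_pos (γ : ℝ) (hx : x.Injective) {i h : ι} (hih : i ≠ h) :
    0 < rieszMatrix γ x i h :=
  Real.rpow_pos_of_pos (norm_sub_pos_iff.2 (hx.ne hih)) _

theorem rieszMatrix_inv_smul [NormedSpace ℝ E] [DecidableEq ι] {d : ℝ} (hd : 0 < d)
    (hγ : γ ≠ 0) (X : ι → E) (i h : ι) :
    rieszMatrix γ (d⁻¹ • X) i h = if i = h then 0 else d ^ γ * ‖X i - X h‖ ^ (-γ) := by
  split_ifs with hih
  · simp [rieszMatrix, hih, Real.zero_rpow (neg_ne_zero.2 hγ)]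
  · rw [rieszMatrix, of_apply, Pi.smul_apply, Pi.smul_apply, ← smul_sub, norm_smul,
      Real.mul_rpow (norm_nonneg _) (norm_nonneg _), Real.norm_of_nonneg (by positivity),
      Real.inv_rpow hd.le, Real.rpow_neg hd.le, inv_inv]

theorem sum_rieszMatrix_le_tsum [Fintype ι] [NormedSpace ℝ E] [FiniteDimensional ℝ E]
    (L : Submodule ℤ E) [DiscreteTopology L] (hγ : Module.finrank ℤ L < γ) (hx : x.Injective)
    (hxL : ∀ i, x i ∈ L) (i : ι) :
    ∑ h, rieszMatrix γ x i h ≤ ∑' v : L, ‖v‖ ^ (-γ) := by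
  have hinj : Function.Injective fun h ↦ (⟨x i - x h, L.sub_mem (hxL i) (hxL h)⟩ : L) :=
    fun h h' heq ↦ hx (sub_right_injective (congrArg Subtype.val heq))
  rw [← tsum_fintype (L := .unconditional _)]
  exact tsum_comp_le_tsum_of_inj (ZLattice.summable_norm_rpow L (-γ) (neg_lt_neg hγ))
    (fun v ↦ by positivity) hinj

end RieszMatrix

section CoordinateLattice

variable {n k m : ℕ} {d : ℝ} {X : Fin ((m + 1) ^ k) → EuclideanSpace ℝ (Fin n)}

/-- The lattice `ℤ^k × {0}` of integer points of `ℝ^n` supported on the first `k` coordinates; it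
contains the points `Q_m` for every `m`. -/
def coordinateLattice (n k : ℕ) : Submodule ℤ (EuclideanSpace ℝ (Fin n)) :=
  Submodule.span ℤ ((fun j : Fin n ↦ EuclideanSpace.single j 1) '' {j | (j : ℕ) < k})

instance (n k : ℕ) : DiscreteTopology (coordinateLattice n k) := by
  let basis := (EuclideanSpace.basisFun (Fin n) ℝ).toBasis
  have hle : coordinateLattice n k ≤ Submodule.span ℤ (range basis) :=
    Submodule.span_mono (by rintro _ ⟨j, -, rfl⟩; exact ⟨j, by simp [basis]⟩)
  have hdiscrete : DiscreteTopology (Submodule.span ℤ (range basis)) := inferInstance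
  exact hdiscrete.of_subset hle

theorem finrank_coordinateLattice_le (n k : ℕ) :
    Module.finrank ℤ (coordinateLattice n k) ≤ k := by
  classical
  refine (finrank_span_le_card _).trans ?_
  rw [Set.toFinset_image]
  refine Finset.card_image_le.trans ?_
  simp [Fin.card_filter_val_lt]

theorem mem_coordinateLattice_of_eq_intCast {x : EuclideanSpace ℝ (Fin n)} {q : Fin n → ℤ}
    (hq : ∀ j : Fin n, k ≤ (j : ℕ) → q j = 0) (hx : ∀ j, x j = q j) :
    x ∈ coordinateLattice n k := by
  have hsum : x = ∑ j, q j • EuclideanSpace.single j (1 : ℝ) := by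
    ext j
    simp [hx, Pi.single_apply]
  rw [hsum]
  refine Submodule.sum_mem _ fun j _ ↦ ?_
  obtain hj | hj := lt_or_ge (j : ℕ) k
  · exact Submodule.smul_mem _ _ (Submodule.subset_span ⟨j, hj, rfl⟩)
  · simp [hq j hj]

namespace latticeEnum

theorem inv_smul (hd : d ≠ 0) (hX : latticeEnum n k m d X) : latticeEnum n k m 1 (d⁻¹ • X) := by
  obtain ⟨hinj, hcoord, hsurj⟩ := hX
  have hrescale (i : Fin ((m + 1) ^ k)) (j : Fin n) (a : ℝ) :
      (d⁻¹ • X) i j = 1 * a ↔ X i j = d * a := by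
    rw [one_mul, Pi.smul_apply, PiLp.smul_apply, smul_eq_mul, inv_mul_eq_iff_eq_mul₀ hd]
  simp only [latticeEnum, hrescale]
  exact ⟨fun i h hih ↦ hinj (smul_right_injective _ (inv_ne_zero hd) hih), hcoord, hsurj⟩

theorem apply_mem_coordinateLattice (hX : latticeEnum n k m 1 X) (i : Fin ((m + 1) ^ k)) :
    X i ∈ coordinateLattice n k := by
  obtain ⟨q, -, hq, hXq⟩ := hX.2.1 i
  exact mem_coordinateLattice_of_eq_intCast hq fun j ↦ by rw [hXq, one_mul]

theorem exists_norm_sub_eq_one (hn : 0 < n) (hk : 1 ≤ k) (hm : 1 ≤ m)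
    (hX : latticeEnum n k m 1 X) (i : Fin ((m + 1) ^ k)) : ∃ h, ‖X i - X h‖ = 1 := by
  obtain ⟨-, hcoord, hsurj⟩ := hX
  obtain ⟨q, hq_mem, hq_zero, hXq⟩ := hcoord i
  let j₀ : Fin n := ⟨0, hn⟩
  obtain ⟨e, he, he_mem⟩ : ∃ e : ℤ, |e| = 1 ∧ 0 ≤ q j₀ + e ∧ q j₀ + e ≤ m := by
    have := hq_mem j₀ hk
    by_cases h0 : q j₀ = 0
    · exact ⟨1, by simp, by lia⟩
    · exact ⟨-1, by simp, by lia⟩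
  obtain ⟨h, hXh⟩ := hsurj (Function.update q j₀ (q j₀ + e))
    (fun j hj ↦ by obtain rfl | hne := eq_or_ne j j₀ <;> simp_all)
    (fun j hj ↦ by
      have hne : j ≠ j₀ := by rintro rfl; exact absurd hj (by simp [j₀]; lia)
      rw [Function.update_of_ne hne, hq_zero j hj])
  have hstep : X i - X h = EuclideanSpace.single j₀ (-(e : ℝ)) := by
    ext j
    obtain rfl | hne := eq_or_ne j j₀ <;> simp_all
  refine ⟨h, ?_⟩
  rw [hstep, PiLp.norm_single, norm_neg, Real.norm_eq_abs]
  exact_mod_cast he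

theorem one_le_sum_rieszMatrix (γ : ℝ) (hn : 0 < n) (hk : 1 ≤ k) (hm : 1 ≤ m)
    (hX : latticeEnum n k m 1 X) (i : Fin ((m + 1) ^ k)) : 1 ≤ ∑ h, rieszMatrix γ X i h := by
  obtain ⟨h, hh⟩ := hX.exists_norm_sub_eq_one hn hk hm i
  calc 1 = rieszMatrix γ X i h := by rw [rieszMatrix, of_apply, hh, Real.one_rpow]
    _ ≤ ∑ h, rieszMatrix γ X i h :=
        Finset.single_le_sum (fun h _ ↦ rieszMatrix_nonneg γ X i h) (Finset.mem_univ h)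

theorem sum_rieszMatrix_le {γ : ℝ} (hγ : k < γ) (hX : latticeEnum n k m 1 X)
    (i : Fin ((m + 1) ^ k)) :
    ∑ h, rieszMatrix γ X i h ≤ ∑' v : coordinateLattice n k, ‖v‖ ^ (-γ) :=
  sum_rieszMatrix_le_tsum _
    ((Nat.cast_le.2 (finrank_coordinateLattice_le n k)).trans_lt hγ) hX.1
    hX.apply_mem_coordinateLattice i

end latticeEnum

end CoordinateLattice

theorem stmt_19_general (n k : ℕ) (γ β c₁ c₂ : ℝ) (hn : 0 < n) (hk : 1 ≤ k) (hkγ : (k : ℝ) < γ)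
    (hγβ : γ < β) (hc₁ : 0 < c₁) (hc₂ : 0 < c₂) :
    ∃ C₁' C₂' : ℝ, 0 < C₁' ∧ C₁' ≤ C₂' ∧
      ∀ m : ℕ, 1 ≤ m → ∀ d : ℝ, 0 < d →
      ∀ X : Fin ((m + 1) ^ k) → EuclideanSpace ℝ (Fin n), latticeEnum n k m d X →
      ∀ A : Fin ((m + 1) ^ k) → Fin ((m + 1) ^ k) → ℝ,
      (∀ i h, A i h = if i = h then 0 else d ^ γ * ‖X i - X h‖ ^ (-γ)) →
      ∀ F : (Fin ((m + 1) ^ k) → ℝ) → ℝ,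
      (∀ z, F z = c₂ / 2 * (∑ i, ∑ h, A i h * z i * z h) -
          (γ * c₁ / (2 * β)) * ∑ h, z h ^ (2 * β / γ)) →
      ∃ b : Fin ((m + 1) ^ k) → ℝ,
        (∀ i, 0 < b i) ∧
        (∀ z : Fin ((m + 1) ^ k) → ℝ, (∀ i, 0 ≤ z i) → F z ≤ F b) ∧
        (∀ i, c₂ * (∑ h, A i h * b h) = c₁ * b i ^ (2 * β / γ - 1)) ∧
        (∀ i, C₁' ≤ b i ∧ b i ≤ C₂') := by
  have hγ : 0 < γ := (Nat.cast_nonneg k).trans_lt hkγ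
  have hp : 2 < 2 * β / γ := by rw [lt_div_iff₀ hγ]; linarith
  let S : ℝ := max 1 (∑' v : coordinateLattice n k, ‖v‖ ^ (-γ))
  refine ⟨(c₂ * 1 / c₁) ^ (2 * β / γ - 2)⁻¹, (c₂ * S / c₁) ^ (2 * β / γ - 2)⁻¹, by positivity,
    Real.rpow_le_rpow (by positivity) (by gcongr; exact le_max_left _ _)
      (inv_nonneg.2 (sub_nonneg.2 hp.le)), ?_⟩
  intro m hm d hd X hX A hA F hF
  have hx : latticeEnum n k m 1 (d⁻¹ • X) := hX.inv_smul hd.ne'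
  have : Nonempty (Fin ((m + 1) ^ k)) := ⟨⟨0, by positivity⟩⟩
  obtain rfl : A = rieszMatrix γ (d⁻¹ • X) := by
    ext i h
    rw [hA, rieszMatrix_inv_smul hd hγ.ne']
  obtain rfl : F = energy (rieszMatrix γ (d⁻¹ • X)) c₁ c₂ (2 * β / γ) := by
    ext z
    rw [hF, energy, div_div_eq_mul_div, mul_comm γ c₁]
    simp only [dotProduct, mulVec, Finset.mul_sum, mul_left_comm, mul_assoc]
  exact exists_pos_isMaxOn_energy (rieszMatrix_isSymm _ _) (rieszMatrix_nonneg _ _)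
    (fun _ _ ↦ rieszMatrix_pos γ hx.1) one_pos (hx.one_le_sum_rieszMatrix γ hn hk hm)
    (fun i ↦ (hx.sum_rieszMatrix_le hkγ i).trans (le_max_right _ _)) hc₁ hc₂ hp

theorem stmt_19 (n k : ℕ) (s β c₁ c₂ : ℝ) (hn0 : 0 < n) (hs0 : 0 < s) (hs1 : s < 1)
    (hn : 2 * s + 2 < (n : ℝ)) (hk1 : 1 ≤ k) (hk2 : (k : ℝ) < ((n : ℝ) - 2 * s) / 2)
    (hβ1 : (n : ℝ) - 2 * s < β) (hβ2 : β < (n : ℝ))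
    (hc₁ : 0 < c₁) (hc₂ : 0 < c₂) :
    -- the bounds `C₁'`, `C₂'` are independent of `m` and `l`
    ∃ C₁' C₂' : ℝ, 0 < C₁' ∧ C₁' ≤ C₂' ∧
      ∀ m l : ℕ, 1 ≤ m → 1 ≤ l →
      ∀ lam : ℝ, lam = (l : ℝ) ^ (((n : ℝ) - 2 * s) / (β - (n : ℝ) + 2 * s)) →
      ∀ X : Fin ((m + 1) ^ k) → EuclideanSpace ℝ (Fin n), latticeEnum n k m (lam * l) X →
      ∀ A : Fin ((m + 1) ^ k) → Fin ((m + 1) ^ k) → ℝ,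
      (∀ i h, A i h = if i = h then 0 else
          (lam * l) ^ ((n : ℝ) - 2 * s) * ‖X i - X h‖ ^ (-((n : ℝ) - 2 * s))) →
      ∀ F : (Fin ((m + 1) ^ k) → ℝ) → ℝ,
      (∀ z, F z = c₂ / 2 * (∑ i, ∑ h, A i h * z i * z h) -
          (((n : ℝ) - 2 * s) * c₁ / (2 * β)) * ∑ h, z h ^ (2 * β / ((n : ℝ) - 2 * s))) →
      ∃ b : Fin ((m + 1) ^ k) → ℝ,
        (∀ i, 0 < b i) ∧
        (∀ z : Fin ((m + 1) ^ k) → ℝ, (∀ i, 0 ≤ z i) → F z ≤ F b) ∧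
        (∀ i, c₂ * (∑ h, A i h * b h) = c₁ * b i ^ (2 * β / ((n : ℝ) - 2 * s) - 1)) ∧
        (∀ i, C₁' ≤ b i ∧ b i ≤ C₂') := by
  obtain ⟨C₁', C₂', hC₁', hC₁₂, h⟩ := stmt_19_general n k (n - 2 * s) β c₁ c₂ hn0 hk1
    (by linarith [k.cast_nonneg (α := ℝ)]) hβ1 hc₁ hc₂
  exact ⟨C₁', C₂', hC₁', hC₁₂, fun m l hm hl lam hlam ↦ h m hm _ (by rw [hlam]; positivity)⟩
end
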